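/- Let X₀ be a proper subshift of X = 𝒜^(ℤ^d). Then there exist a continuous function φ : X → ℝ and β_c ∈ (0,1] such that: (i) φ has a freezing phase transition at β_c; (ii) for every β > β_c, ES(βφ) equals the set of measures of maximal entropy on X₀, and also equals ZTA(φ); (iii) for every β < β_c, every μ ∈ ES(βφ) satisfies μ(X₀) = 0. -/

import Mathlib

open MeasureTheory Filter Topology
open scoped ENNReal Classical

namespace Freezing

/-- The configuration space `X = 𝒜^(ℤ^d)`. -/
abbrev Cfg (d : ℕ) (A : Type) : Type := (Fin d → ℤ) → A

section Defs

variable {d : ℕ} {A : Type} [Fintype A] [TopologicalSpace A] [DiscreteTopology A]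
  [MeasurableSpace A] [BorelSpace A]

/-- The shift action: `(σ^n x)_m = x_{n+m}`. -/
def shift (n : Fin d → ℤ) (x : Cfg d A) : Cfg d A := fun m => x (n + m)

/-- Shift-invariance of a measure. -/
def Invariant (μ : Measure (Cfg d A)) : Prop :=
  ∀ n : Fin d → ℤ, Measure.map (shift n) μ = μ

/-- Cylinder set `[w]` for a pattern `w` on `E_n = ([0,n-1] ∩ ℤ)^d`. -/
def cylE (n : ℕ) (w : (Fin d → Fin n) → A) : Set (Cfg d A) :=
  { x | ∀ m : Fin d → Fin n, x (fun i => ((m i : ℕ) : ℤ)) = w m }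

/-- Measure-theoretic entropy `h(μ) = inf_{n ≥ 1} n^{-d} Σ_w (-μ[w] log μ[w])`. -/
noncomputable def entropy (μ : Measure (Cfg d A)) : ℝ :=
  ⨅ n : {n : ℕ // 1 ≤ n},
    ((n.1 : ℝ) ^ d)⁻¹ *
      ∑ w : (Fin d → Fin n.1) → A, Real.negMulLog (μ (cylE n.1 w)).toReal

/-- Pressure `p_φ(β) = sup { h(μ) + β ∫ φ dμ }` over shift-invariant probability measures. -/
noncomputable def pressure (φ : Cfg d A → ℝ) (β : ℝ) : ℝ :=
  sSup { r | ∃ μ : Measure (Cfg d A), IsProbabilityMeasure μ ∧ Invariant μ ∧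
    r = entropy μ + β * ∫ x, φ x ∂μ }

/-- The set of equilibrium states of `βφ`. -/
def ES (φ : Cfg d A → ℝ) (β : ℝ) : Set (Measure (Cfg d A)) :=
  { μ | IsProbabilityMeasure μ ∧ Invariant μ ∧
      entropy μ + β * ∫ x, φ x ∂μ = pressure φ β }

/-- `φ` has a freezing phase transition at `βc`. -/
def FreezingPT (φ : Cfg d A → ℝ) (βc : ℝ) : Prop :=
  (∀ β β' : ℝ, βc < β → βc < β' → ES φ β = ES φ β') ∧
  (∀ β β' : ℝ, β < βc → βc < β' → ES φ β ≠ ES φ β')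

/-- `s_φ = sup { ∫ φ dμ }` over shift-invariant probability measures. -/
noncomputable def sPhi (φ : Cfg d A → ℝ) : ℝ :=
  sSup { r | ∃ μ : Measure (Cfg d A), IsProbabilityMeasure μ ∧ Invariant μ ∧
    r = ∫ x, φ x ∂μ }

/-- The set of maximizing measures of `φ`. -/
def MM (φ : Cfg d A → ℝ) : Set (Measure (Cfg d A)) :=
  { μ | IsProbabilityMeasure μ ∧ Invariant μ ∧ (∫ x, φ x ∂μ) = sPhi φ }

/-- `h_φ = sup { h(η) : η ∈ MM(φ) }`. -/
noncomputable def hPhi (φ : Cfg d A → ℝ) : ℝ :=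
  sSup { r | ∃ μ ∈ MM φ, r = entropy μ }

/-- The zero-temperature accumulation points of `φ`. -/
def ZTA (φ : Cfg d A → ℝ) : Set (Measure (Cfg d A)) :=
  { μ | IsProbabilityMeasure μ ∧ Invariant μ ∧
      ∃ (β : ℕ → ℝ) (μs : ℕ → Measure (Cfg d A)),
        Tendsto β atTop atTop ∧ (∀ k, μs k ∈ ES φ (β k)) ∧
        ∀ f : Cfg d A → ℝ, Continuous f →
          Tendsto (fun k => ∫ x, f x ∂(μs k)) atTop (𝓝 (∫ x, f x ∂μ)) }

/-- A subshift: nonempty, closed, invariant under every shift. -/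
def IsSubshift (X₀ : Set (Cfg d A)) : Prop :=
  X₀.Nonempty ∧ IsClosed X₀ ∧ ∀ n : Fin d → ℤ, ∀ x ∈ X₀, shift n x ∈ X₀

/-- The language `L_{E_n}(X₀)`: patterns on `E_n` appearing at the origin of points of `X₀`. -/
def langE (X₀ : Set (Cfg d A)) (n : ℕ) : Set ((Fin d → Fin n) → A) :=
  { w | ∃ x ∈ X₀, ∀ m : Fin d → Fin n, x (fun i => ((m i : ℕ) : ℤ)) = w m }

/-- Topological entropy `h_top(X₀) = inf_{n ≥ 1} n^{-d} log |L_{E_n}(X₀)|`. -/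
noncomputable def topEnt (X₀ : Set (Cfg d A)) : ℝ :=
  ⨅ n : {n : ℕ // 1 ≤ n}, ((n.1 : ℝ) ^ d)⁻¹ * Real.log ((langE X₀ n.1).ncard)

/-- A measure of maximal entropy on the subshift `X₀`. -/
def IsMME (X₀ : Set (Cfg d A)) (μ : Measure (Cfg d A)) : Prop :=
  IsProbabilityMeasure μ ∧ Invariant μ ∧ μ X₀ = 1 ∧ entropy μ = topEnt X₀

/-- Ergodicity: invariant Borel sets have measure `0` or `1`. -/
def ErgodicInv (μ : Measure (Cfg d A)) : Prop :=
  ∀ s : Set (Cfg d A), MeasurableSet s → (∀ n : Fin d → ℤ, shift n ⁻¹' s = s) →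
    μ s = 0 ∨ μ s = 1

/-- The `n`-th variation `var_n φ`, over pairs agreeing on `B_n = ([-n,n] ∩ ℤ)^d`. -/
noncomputable def varPot (φ : Cfg d A → ℝ) (n : ℕ) : ℝ :=
  sSup { r | ∃ x y : Cfg d A,
    (∀ m : Fin d → ℤ, (∀ i, |m i| ≤ (n : ℤ)) → x m = y m) ∧ r = |φ x - φ y| }

/-- Sup-norm `‖m‖_∞` of a site `m ∈ ℤ^d`. -/
def supNorm (m : Fin d → ℤ) : ℕ := Finset.univ.sup fun i => (m i).natAbs

/-- The metric `dist(x,y) = 2^{-min{‖n‖_∞ : x_n ≠ y_n}}`. -/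
noncomputable def cfgDist (x y : Cfg d A) : ℝ :=
  if x = y then 0
  else (2 : ℝ) ^
    (-((sInf { k : ℕ | ∃ m : Fin d → ℤ, supNorm m = k ∧ x m ≠ y m } : ℕ) : ℤ))

/-- Distance from a point to a subshift. -/
noncomputable def distToSub (X₀ : Set (Cfg d A)) (x : Cfg d A) : ℝ :=
  sInf { r | ∃ y ∈ X₀, r = cfgDist x y }

end Defs

/-!
Take `φ = -ψ`, where `ψ ≥ 0` vanishes exactly on `X₀` and is so large off `X₀` that
`h(μ) ≤ h_top(X₀) + ∫ ψ dμ` for every invariant `μ`. The inequality comes from coding. At the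
factorial scales `n_j = (j + 1)!` a pattern on `E_{n_{j+1}}` is described by its index in the
language of `X₀` if it occurs there, and otherwise by concatenating the descriptions of its blocks
at scale `n_j`. If `ψ` is at least the excess rate of the code at scale `n_j` on every translate of
`E_{n_{j+1}}` carrying a pattern foreign to `X₀`, then the code word of `x|_{E_n}` has length about
`n^d h_top(X₀) + ∑_{s ∈ E_n} ψ(σ^s x)`, and Gibbs' inequality bounds the entropy by the mean code
length. The excess rates tend to `0`, so `ψ` can be chosen continuous.

The inequality says that the pressure is at most `h_top(X₀)` at `β = 1`, and it is never smaller,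
since `φ` vanishes on `X₀`, which carries a measure of maximal entropy. Let `β_c` be the infimum of
the `β` at which the two agree; it is positive because a measure of maximal entropy on the full
shift beats `X₀` for small `β`. Above `β_c` an equilibrium state must satisfy `∫ φ dμ = 0`, so it
lives on `X₀`. Below `β_c` an equilibrium state that charges `X₀` could be conditioned on `X₀`; the
conditional measure would be an equilibrium state again, since entropy is affine, and its free
energy would be at most `h_top(X₀)`, a contradiction.
-/

section Reals

/-- The factorial scales `(j + 1)!`: each divides the next one, and every positive integer divides
all but finitely many of them, so limits along them compute infima of quantities that decrease
along divisibility. -/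
def scale (j : ℕ) : ℕ := (j + 1).factorial

theorem scale_pos (j : ℕ) : 0 < scale j := Nat.factorial_pos _

theorem lt_scale (j : ℕ) : j < scale j := Nat.self_le_factorial _

theorem dvd_scale {n j : ℕ} (hn : 1 ≤ n) (h : n ≤ j) : n ∣ scale j :=
  Nat.dvd_factorial hn (by lia)

theorem tendsto_scale : Tendsto (fun j => (scale j : ℝ)) atTop atTop :=
  tendsto_natCast_atTop_atTop.comp <| tendsto_atTop_mono (fun j => (lt_scale j).le) tendsto_id

theorem tendsto_scale_iInf {b : ℕ → ℝ}
    (hbdd : BddBelow (Set.range fun n : {n : ℕ // 1 ≤ n} => b n))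
    (hdvd : ∀ m n, 1 ≤ m → n ∣ m → b m ≤ b n) :
    Tendsto (fun j => b (scale j)) atTop (𝓝 (⨅ n : {n : ℕ // 1 ≤ n}, b n)) := by
  have : Nonempty {n : ℕ // 1 ≤ n} := ⟨⟨1, le_rfl⟩⟩
  refine tendsto_order.2 ⟨fun c hc => .of_forall fun j => ?_, fun c hc => ?_⟩
  · exact hc.trans_le (ciInf_le hbdd ⟨scale j, scale_pos j⟩)
  · obtain ⟨⟨n, hn⟩, hbn⟩ := exists_lt_of_ciInf_lt hc
    filter_upwards [eventually_ge_atTop n] with j hj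
    exact (hdvd _ n (scale_pos j) (dvd_scale hn hj)).trans_lt hbn

theorem tendsto_scale_iInf_div_pow (d : ℕ) {a : ℕ → ℝ} (ha : ∀ n, 0 ≤ a n)
    (hmul : ∀ r n, a (r * n) ≤ (r : ℝ) ^ d * a n) :
    Tendsto (fun j => ((scale j : ℝ) ^ d)⁻¹ * a (scale j)) atTop
      (𝓝 (⨅ n : {n : ℕ // 1 ≤ n}, ((n.1 : ℝ) ^ d)⁻¹ * a n.1)) := by
  refine tendsto_scale_iInf (b := fun n => ((n : ℝ) ^ d)⁻¹ * a n) ⟨0, ?_⟩ fun m n hm hnm => ?_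
  · rintro _ ⟨n, rfl⟩
    exact mul_nonneg (by positivity) (ha _)
  · obtain ⟨r, rfl⟩ := hnm
    have hn : (0 : ℝ) < n := by exact_mod_cast Nat.pos_of_mul_pos_right hm
    have hr : (0 : ℝ) < r := by exact_mod_cast Nat.pos_of_mul_pos_left hm
    rw [mul_comm n r, Nat.cast_mul, mul_pow, inv_mul_le_iff₀ (by positivity)]
    calc a (r * n) ≤ (r : ℝ) ^ d * a n := hmul r n
      _ = (r : ℝ) ^ d * (n : ℝ) ^ d * (((n : ℝ) ^ d)⁻¹ * a n) := by field_simp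

theorem tendsto_one_sub_pow_scale (c : ℝ) (d : ℕ) :
    Tendsto (fun j => 1 - (1 - c * (scale j : ℝ)⁻¹) ^ d) atTop (𝓝 0) := by
  simpa using
    ((((tendsto_inv_atTop_zero.comp tendsto_scale).const_mul c).const_sub 1).pow d).const_sub 1

theorem tendsto_inv_pow_scale {d : ℕ} (hd : 1 ≤ d) :
    Tendsto (fun j => ((scale j : ℝ) ^ d)⁻¹) atTop (𝓝 0) :=
  tendsto_inv_atTop_zero.comp ((tendsto_pow_atTop (by lia)).comp tendsto_scale)

theorem negMulLog_add_le {x y : ℝ} (hx : 0 ≤ x) (hy : 0 ≤ y) :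
    Real.negMulLog (x + y) ≤ Real.negMulLog x + Real.negMulLog y := by
  have log_mono {s t : ℝ} (hs : 0 ≤ s) (ht : 0 ≤ t) : s * Real.log s ≤ s * Real.log (s + t) := by
    rcases hs.eq_or_lt with rfl | hs
    · simp
    · exact mul_le_mul_of_nonneg_left (Real.log_le_log hs (by linarith)) hs.le
  have hxy := log_mono hx hy
  have hyx := log_mono hy hx
  rw [add_comm y x] at hyx
  simp only [Real.negMulLog]
  linarith

theorem gibbs_inequality {ι : Type*} [Fintype ι] {a P : ι → ℝ} (ha : ∀ i, 0 ≤ a i)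
    (hP : ∀ i, 0 ≤ P i) (hpos : ∀ i, 0 < a i → 0 < P i) (hsum : ∑ i, a i = 1) :
    ∑ i, Real.negMulLog (a i) ≤ ∑ i, a i * -Real.log (P i) + Real.log (∑ i, P i) := by
  set C := ∑ i, P i with hC
  obtain ⟨i₀, hi₀⟩ : ∃ i, 0 < a i := by
    by_contra! h
    linarith [Finset.sum_nonpos fun i (_ : i ∈ Finset.univ) => h i]
  have hC_pos : 0 < C :=
    Finset.sum_pos' (fun i _ => hP i) ⟨i₀, Finset.mem_univ _, hpos i₀ hi₀⟩
  -- termwise, `log t ≤ t - 1` at `t = P i / (C * a i)`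
  have termwise (i) : Real.negMulLog (a i) ≤
      a i * -Real.log (P i) + a i * Real.log C + (P i / C - a i) := by
    rcases (ha i).eq_or_lt with h | h
    · simpa [← h] using div_nonneg (hP i) hC_pos.le
    · have hPi := hpos i h
      have hlog := mul_le_mul_of_nonneg_left
        (Real.log_le_sub_one_of_pos (show 0 < P i / C / a i by positivity)) h.le
      rw [Real.log_div (by positivity) h.ne', Real.log_div hPi.ne' hC_pos.ne',
        show a i * (P i / C / a i - 1) = P i / C - a i by field_simp] at hlog
      rw [Real.negMulLog]
      linarith
  calc ∑ i, Real.negMulLog (a i)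
      ≤ ∑ i, (a i * -Real.log (P i) + a i * Real.log C + (P i / C - a i)) :=
        Finset.sum_le_sum fun i _ => termwise i
    _ = ∑ i, a i * -Real.log (P i) + Real.log C := by
        rw [Finset.sum_add_distrib, Finset.sum_add_distrib, Finset.sum_sub_distrib,
          ← Finset.sum_mul, hsum, ← Finset.sum_div, ← hC, div_self hC_pos.ne']
        ring

end Reals

section FiniteSums

theorem sum_comp_le_of_injective {ι κ : Type*} [Fintype ι] [Fintype κ] {e : ι → κ}
    (he : Function.Injective e) {f : κ → ℝ} (hf : ∀ k, 0 ≤ f k) : ∑ i, f (e i) ≤ ∑ k, f k := by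
  rw [← Finset.sum_image (f := f) fun i _ j _ h => he h]
  exact Finset.sum_le_univ_sum_of_nonneg hf

theorem sum_comp_of_injective {ι κ A : Type*} [Fintype ι] [DecidableEq ι] [Fintype κ]
    [DecidableEq κ] [Fintype A] {e : ι → κ} (he : Function.Injective e) (F : (ι → A) → ℝ) :
    ∑ w : κ → A, F (w ∘ e) =
      (Fintype.card A : ℝ) ^ (Fintype.card κ - Fintype.card ι) * ∑ v, F v := by
  let split : (κ → A) ≃ (ι → A) × ({k // k ∉ Set.range e} → A) :=
    (Equiv.piEquivPiSubtypeProd (· ∈ Set.range e) fun _ => A).trans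
      (Equiv.prodCongr ((Equiv.ofInjective e he).symm.arrowCongr (Equiv.refl A)) (Equiv.refl _))
  have card_off_range : Fintype.card ({k // k ∉ Set.range e} → A) =
      Fintype.card A ^ (Fintype.card κ - Fintype.card ι) := by
    rw [Fintype.card_fun, Fintype.card_subtype_compl]
    congr 2
    exact (Fintype.card_congr (Equiv.ofInjective e he)).symm
  rw [Fintype.sum_equiv split (fun w => F (w ∘ e)) (fun p => F p.1) fun w => rfl,
    Fintype.sum_prod_type]
  simp only [Finset.sum_const, Finset.card_univ, card_off_range, nsmul_eq_mul, Nat.cast_pow]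
  rw [Finset.mul_sum]

end FiniteSums

section CompactSpaces

variable {X : Type*} [TopologicalSpace X]

theorem continuous_iSup_of_le_of_tendsto_zero {f : ℕ → X → ℝ} {c : ℕ → ℝ}
    (hf : ∀ j, Continuous (f j)) (hnonneg : ∀ j x, 0 ≤ f j x) (hle : ∀ j x, f j x ≤ c j)
    (hc : Tendsto c atTop (𝓝 0)) : Continuous fun x => ⨆ j, f j x := by
  have bdd (x : X) : BddAbove (Set.range fun j => f j x) :=
    hc.bddAbove_range.range_mono _ fun j => hle j x
  -- the partial suprema converge uniformly
  refine TendstoUniformly.continuous (F := fun J => partialSups f J) (p := atTop) ?_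
    (Frequently.of_forall fun J => Continuous.partialSups fun j _ => hf j)
  refine Metric.tendstoUniformly_iff.2 fun ε hε => ?_
  obtain ⟨J₀, hJ₀⟩ := eventually_atTop.1 (hc.eventually_lt_const (half_pos hε))
  filter_upwards [eventually_ge_atTop J₀] with J hJ x
  rw [Pi.partialSups_apply]
  have lower : partialSups (f · x) J ≤ ⨆ j, f j x :=
    partialSups_le _ _ _ fun j _ => le_ciSup (bdd x) j
  have upper : ⨆ j, f j x ≤ partialSups (f · x) J + ε / 2 := by
    have hpos : 0 ≤ partialSups (f · x) J :=
      (hnonneg 0 x).trans (le_partialSups_of_le (f · x) (Nat.zero_le J))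
    refine ciSup_le fun j => ?_
    rcases le_total j J with hj | hj
    · linarith [le_partialSups_of_le (f · x) hj]
    · linarith [hle j x, hJ₀ j (hJ.trans hj)]
  rw [Real.dist_eq, abs_lt]
  constructor <;> linarith

theorem measure_eq_one_of_tendsto_integral [MeasurableSpace X] [BorelSpace X]
    [HasOuterApproxClosed X] {ι : Type*} {L : Filter ι} [L.NeBot] {μs : ι → Measure X}
    {μ : Measure X} (hμs : ∀ k, IsProbabilityMeasure (μs k)) [IsProbabilityMeasure μ]
    (hlim : ∀ f : X → ℝ, Continuous f → Tendsto (fun k => ∫ x, f x ∂(μs k)) L (𝓝 (∫ x, f x ∂μ)))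
    {F : Set X} (hF : IsClosed F) (hone : ∀ k, μs k F = 1) : μ F = 1 := by
  have hlim' : Tendsto (β := ProbabilityMeasure X) (fun k => ⟨μs k, hμs k⟩) L
      (𝓝 ⟨μ, inferInstance⟩) :=
    ProbabilityMeasure.tendsto_iff_forall_integral_tendsto.2 fun f => hlim f f.continuous
  have hlimsup := ProbabilityMeasure.limsup_measure_closed_le_of_tendsto hlim' hF
  simp only [ProbabilityMeasure.coe_mk, hone, limsup_const] at hlimsup
  exact le_antisymm prob_le_one hlimsup

variable [CompactSpace X]

theorem exists_abs_le_of_continuous {f : X → ℝ} (hf : Continuous f) : ∃ B, ∀ x, |f x| ≤ B := by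
  obtain ⟨B, hB⟩ := isCompact_univ.exists_bound_of_continuousOn hf.continuousOn
  exact ⟨B, fun x => hB x trivial⟩

variable [MeasurableSpace X] [BorelSpace X]

theorem integrable_of_continuous {f : X → ℝ} (hf : Continuous f) (μ : Measure X)
    [IsFiniteMeasure μ] : Integrable f μ :=
  hf.integrable_of_hasCompactSupport (HasCompactSupport.of_compactSpace f)

theorem exists_tendsto_integral_ultrafilter {ι : Type*} (U : Ultrafilter ι) [T2Space X]
    (μs : ι → ProbabilityMeasure X) :
    ∃ μ : ProbabilityMeasure X, ∀ f : X → ℝ, Continuous f →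
      Tendsto (fun k => ∫ x, f x ∂(μs k : Measure X)) U (𝓝 (∫ x, f x ∂(μ : Measure X))) := by
  obtain ⟨μ, -, hμ⟩ := (isCompact_univ (X := ProbabilityMeasure X)).ultrafilter_le_nhds
    (U.map μs) (by simp)
  refine ⟨μ, fun f hf => ?_⟩
  exact ((ProbabilityMeasure.continuous_integral_continuousMap
    (⟨f, hf⟩ : C(X, ℝ))).tendsto μ).comp hμ

end CompactSpaces

section Patterns

variable {d : ℕ} {A : Type}

/-- The box `E_n`, whose sites are kept as tuples of `Fin n`; see `toSite`. -/
abbrev Box (d n : ℕ) : Type := Fin d → Fin n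

/-- The inclusion of `E_n` into `ℤ^d`. -/
def toSite {n : ℕ} (s : Box d n) : Fin d → ℤ := fun i => ((s i : ℕ) : ℤ)

/-- The pattern `x|_{E_n}`. -/
def pattern (n : ℕ) (x : Cfg d A) : Box d n → A := fun m => x (toSite m)

theorem cylE_eq_preimage (n : ℕ) (w : Box d n → A) : cylE n w = pattern n ⁻¹' {w} :=
  Set.ext fun _ => ⟨fun h => funext h, fun h m => congrFun h m⟩

theorem mem_langE {X₀ : Set (Cfg d A)} {n : ℕ} {w : Box d n → A} :
    w ∈ langE X₀ n ↔ ∃ x ∈ X₀, pattern n x = w :=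
  ⟨fun ⟨x, hx, h⟩ => ⟨x, hx, funext h⟩, fun ⟨x, hx, h⟩ => ⟨x, hx, congrFun h⟩⟩

theorem pattern_mem_langE {X₀ : Set (Cfg d A)} {x : Cfg d A} (hx : x ∈ X₀) (n : ℕ) :
    pattern n x ∈ langE X₀ n :=
  mem_langE.2 ⟨x, hx, rfl⟩

theorem shift_shift (m n : Fin d → ℤ) (x : Cfg d A) : shift m (shift n x) = shift (n + m) x := by
  funext k
  simp [shift, add_assoc]

theorem shift_zero (x : Cfg d A) : shift 0 x = x := by
  funext k
  simp [shift]

theorem IsSubshift.preimage_shift [TopologicalSpace A] {X₀ : Set (Cfg d A)} (hsub : IsSubshift X₀)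
    (n : Fin d → ℤ) : shift n ⁻¹' X₀ = X₀ := by
  refine Set.Subset.antisymm (fun x hx => ?_) (hsub.2.2 n)
  simpa [shift_shift, shift_zero] using hsub.2.2 (-n) _ hx

theorem pattern_surjective [Nonempty A] (n : ℕ) :
    Function.Surjective (pattern n : Cfg d A → Box d n → A) := by
  have toSite_injective : Function.Injective (toSite : Box d n → Fin d → ℤ) := fun s t h =>
    funext fun i => Fin.ext (Int.ofNat_inj.1 (congrFun h i))
  exact fun w => ⟨Function.extend toSite w fun _ => Classical.arbitrary A,
    funext fun m => toSite_injective.extend_apply _ _ _⟩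

/-- The site `n • i + s` of `E_{rn}`: position `s` in block `i` of the tiling of `E_{rn}` by `r^d`
translates of `E_n`. -/
def boxMulEquiv (d r n : ℕ) : Box d r × Box d n ≃ Box d (r * n) :=
  (Equiv.arrowProdEquivProdArrow (Fin d) (fun _ => Fin r) (fun _ => Fin n)).symm.trans
    (Equiv.arrowCongr (Equiv.refl _) finProdFinEquiv)

theorem toSite_boxMulEquiv {r n : ℕ} (i : Box d r) (s : Box d n) :
    toSite (boxMulEquiv d r n (i, s)) = (n : ℤ) • toSite i + toSite s := by
  funext c
  change ((s c + n * i c : ℕ) : ℤ) = (n : ℤ) * (i c : ℕ) + (s c : ℕ)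
  push_cast
  ring

theorem sum_toSite_mul (r n : ℕ) (f : (Fin d → ℤ) → ℝ) :
    ∑ i : Box d r, ∑ s : Box d n, f ((n : ℤ) • toSite i + toSite s) =
      ∑ s : Box d (r * n), f (toSite s) := by
  rw [← Fintype.sum_prod_type']
  exact Fintype.sum_equiv (boxMulEquiv d r n) _ _ fun p => by rw [← toSite_boxMulEquiv]

theorem sum_toSite_le_of_le {m n : ℕ} (h : m ≤ n) {f : (Fin d → ℤ) → ℝ} (hf : ∀ v, 0 ≤ f v) :
    ∑ s : Box d m, f (toSite s) ≤ ∑ s : Box d n, f (toSite s) :=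
  sum_comp_le_of_injective (e := fun (s : Box d m) c => Fin.castLE h (s c))
    (f := fun s => f (toSite s))
    (fun _ _ hs => funext fun c => Fin.castLE_injective h (congrFun hs c)) fun _ => hf _

/-- The block with index `i` of a pattern on `E_{rn}`, as a pattern on `E_n`. -/
def block {r n : ℕ} (w : Box d (r * n) → A) (i : Box d r) : Box d n → A :=
  fun s => w (boxMulEquiv d r n (i, s))

theorem block_bijective (r n : ℕ) :
    Function.Bijective (block : (Box d (r * n) → A) → Box d r → Box d n → A) :=
  ((Equiv.arrowCongr (boxMulEquiv d r n).symm (Equiv.refl A)).trans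
    (Equiv.curry _ _ _)).bijective

theorem block_pattern {r n : ℕ} (x : Cfg d A) (i : Box d r) :
    block (pattern (r * n) x) i = pattern n (shift ((n : ℤ) • toSite i) x) := by
  funext s
  simp only [block, pattern, shift, toSite_boxMulEquiv]

theorem sum_prod_block [Fintype A] {r n : ℕ} (f : (Box d n → A) → ℝ) :
    ∑ w : Box d (r * n) → A, ∏ i, f (block w i) = (∑ u, f u) ^ r ^ d := by
  rw [Fintype.sum_bijective block (block_bijective r n) _
    (fun v : Box d r → Box d n → A => ∏ i, f (v i)) fun _ => rfl,
    ← Fintype.prod_sum (fun _ : Box d r => f)]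
  simp

/-- The sum `t + s` of a site of `E_m` and a site of `E_n`, in `E_{n+m}`. -/
def boxAdd {m n : ℕ} (t : Box d m) (s : Box d n) : Box d (n + m) :=
  fun c => ⟨t c + s c, by lia⟩

theorem toSite_boxAdd {m n : ℕ} (t : Box d m) (s : Box d n) :
    toSite (boxAdd t s) = toSite t + toSite s := by
  funext c
  simp [toSite, boxAdd]

theorem boxAdd_injective {m n : ℕ} (t : Box d m) :
    Function.Injective (boxAdd t : Box d n → Box d (n + m)) := fun s s' h => by
  funext c
  have := congrArg Fin.val (congrFun h c)
  simp only [boxAdd] at this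
  lia

theorem pattern_comp_boxAdd {m n : ℕ} (t : Box d m) (x : Cfg d A) :
    pattern (n + m) x ∘ boxAdd t = pattern n (shift (toSite t) x) := by
  funext s
  simp only [Function.comp_apply, pattern, shift, toSite_boxAdd]

section Topology

variable [TopologicalSpace A]

theorem continuous_pattern (n : ℕ) : Continuous (pattern n : Cfg d A → Box d n → A) :=
  continuous_pi fun _ => continuous_apply _

theorem continuous_shift (n : Fin d → ℤ) : Continuous (shift n : Cfg d A → Cfg d A) :=
  continuous_pi fun _ => continuous_apply _

theorem continuous_comp_pattern [DiscreteTopology A] {Y : Type*} [TopologicalSpace Y] (n : ℕ)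
    (F : (Box d n → A) → Y) : Continuous fun x : Cfg d A => F (pattern n x) :=
  continuous_of_discreteTopology.comp (continuous_pattern n)

end Topology

section Measurability

variable [MeasurableSpace A]

theorem measurable_pattern (n : ℕ) : Measurable (pattern n : Cfg d A → Box d n → A) :=
  measurable_pi_lambda _ fun _ => measurable_pi_apply _

theorem measurable_shift (n : Fin d → ℤ) : Measurable (shift n : Cfg d A → Cfg d A) :=
  measurable_pi_lambda _ fun _ => measurable_pi_apply _

theorem Invariant.integral_comp_shift {μ : Measure (Cfg d A)} (hμ : Invariant μ) (n : Fin d → ℤ)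
    {f : Cfg d A → ℝ} (hf : AEStronglyMeasurable f μ) :
    ∫ x, f (shift n x) ∂μ = ∫ x, f x ∂μ := by
  conv_rhs => rw [← hμ n]
  rw [integral_map (measurable_shift n).aemeasurable (by rwa [hμ n])]

theorem Invariant.measure_preimage_shift {μ : Measure (Cfg d A)} (hμ : Invariant μ)
    (n : Fin d → ℤ) {S : Set (Cfg d A)} (hS : MeasurableSet S) : μ (shift n ⁻¹' S) = μ S := by
  conv_rhs => rw [← hμ n, Measure.map_apply (measurable_shift n) hS]

variable [MeasurableSingletonClass A]

theorem measurableSet_cylE [Finite A] (n : ℕ) (w : Box d n → A) : MeasurableSet (cylE n w) := by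
  rw [cylE_eq_preimage]
  exact measurable_pattern n (MeasurableSet.singleton w)

variable (μ : Measure (Cfg d A))

theorem integrable_comp_pattern [Finite A] [IsFiniteMeasure μ] (n : ℕ) (F : (Box d n → A) → ℝ) :
    Integrable (fun x => F (pattern n x)) μ :=
  Integrable.of_finite.comp_measurable (measurable_pattern n)

theorem measureReal_cylE_eq_integral [Finite A] (n : ℕ) (w : Box d n → A) :
    μ.real (cylE n w) = ∫ x, (if pattern n x = w then 1 else 0) ∂μ := by
  rw [← integral_indicator_one (measurableSet_cylE n w)]
  simp [cylE_eq_preimage, Set.indicator_apply]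

theorem integral_comp_pattern [Fintype A] [IsFiniteMeasure μ] (n : ℕ) (F : (Box d n → A) → ℝ) :
    ∫ x, F (pattern n x) ∂μ = ∑ w, μ.real (cylE n w) * F w := by
  rw [← integral_map (f := F) (measurable_pattern n).aemeasurable
    Integrable.of_finite.aestronglyMeasurable, integral_fintype Integrable.of_finite]
  refine Finset.sum_congr rfl fun w _ => ?_
  rw [map_measureReal_apply (measurable_pattern n) (MeasurableSet.singleton w),
    ← cylE_eq_preimage, smul_eq_mul]

theorem sum_measureReal_cylE [Fintype A] (μ : Measure (Cfg d A)) [IsProbabilityMeasure μ] (n : ℕ) :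
    ∑ w : Box d n → A, μ.real (cylE n w) = 1 := by
  simpa using (integral_comp_pattern μ n fun _ => 1).symm

end Measurability

end Patterns

section Languages

variable {d : ℕ} {A : Type} {X₀ : Set (Cfg d A)}

/-- The configurations for which some translate of `E_n` containing the origin carries a pattern
foreign to `X₀`. -/
def illegal (X₀ : Set (Cfg d A)) (n : ℕ) : Set (Cfg d A) :=
  {x | ∃ s : Box d n, pattern n (shift (-toSite s) x) ∉ langE X₀ n}

theorem isClopen_illegal [TopologicalSpace A] [DiscreteTopology A] (X₀ : Set (Cfg d A)) (n : ℕ) :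
    IsClopen (illegal X₀ n) := by
  have : illegal X₀ n =
      ⋃ s : Box d n, (fun x => pattern n (shift (-toSite s) x)) ⁻¹' (langE X₀ n)ᶜ := by
    ext x
    simp [illegal]
  rw [this]
  exact isClopen_iUnion_of_finite fun s =>
    (isClopen_discrete _).preimage ((continuous_pattern n).comp (continuous_shift _))

theorem disjoint_illegal [TopologicalSpace A] (hsub : IsSubshift X₀) (n : ℕ) :
    Disjoint X₀ (illegal X₀ n) :=
  Set.disjoint_left.2 fun x hx ⟨_, hs⟩ => hs (pattern_mem_langE (hsub.2.2 _ x hx) n)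

theorem exists_forall_mem_illegal [TopologicalSpace A] (hsub : IsSubshift X₀) {x : Cfg d A}
    (hx : x ∉ X₀) :
    ∃ R : ℕ, ∀ n, 2 * R + 1 ≤ n → x ∈ illegal X₀ n := by
  obtain ⟨I, u, hu, hIu⟩ := isOpen_pi_iff.1 hsub.2.1.isOpen_compl x hx
  obtain ⟨R, hR⟩ : ∃ R : ℕ, ∀ m ∈ I, ∀ i, (m i).natAbs ≤ R :=
    ⟨I.sup fun m => Finset.univ.sup fun i => (m i).natAbs, fun m hm i =>
      (Finset.le_sup (f := fun i => (m i).natAbs) (Finset.mem_univ i)).trans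
        (Finset.le_sup (f := fun m : Fin d → ℤ => Finset.univ.sup fun i => (m i).natAbs) hm)⟩
  -- the window `[-R, n - R)` contains all coordinates that witness `x ∉ X₀`
  refine ⟨R, fun n hn => ⟨fun _ => ⟨R, by lia⟩, fun hmem => ?_⟩⟩
  obtain ⟨y, hy, hyx⟩ := mem_langE.1 hmem
  refine hIu (fun m hm => ?_) (hsub.2.2 (fun _ => (R : ℤ)) y hy)
  have hm' := hR m hm
  let s : Box d n := fun i => ⟨((R : ℤ) + m i).toNat, by have := hm' i; lia⟩
  have hs : toSite s = (fun _ => (R : ℤ)) + m := by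
    funext i
    have := hm' i
    simp only [toSite, s, Pi.add_apply]
    lia
  have agree : y ((fun _ => (R : ℤ)) + m) = x m := by
    have := congrFun hyx s
    simp only [pattern, shift, hs] at this
    rw [this]
    congr 1
    funext i
    simp [toSite]
  rw [shift, agree]
  exact (hu m hm).2

theorem topEnt_nonneg (X₀ : Set (Cfg d A)) : 0 ≤ topEnt X₀ :=
  Real.iInf_nonneg fun _ => mul_nonneg (by positivity) (Real.log_natCast_nonneg _)

theorem topEnt_le (X₀ : Set (Cfg d A)) {n : ℕ} (hn : 1 ≤ n) :
    topEnt X₀ ≤ ((n : ℝ) ^ d)⁻¹ * Real.log (langE X₀ n).ncard :=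
  ciInf_le (f := fun n : {n : ℕ // 1 ≤ n} => ((n.1 : ℝ) ^ d)⁻¹ * Real.log (langE X₀ n.1).ncard)
    ⟨0, by
      rintro _ ⟨n, rfl⟩
      exact mul_nonneg (by positivity) (Real.log_natCast_nonneg _)⟩ ⟨n, hn⟩

theorem card_pattern (d n : ℕ) (A : Type) [Fintype A] :
    Fintype.card (Box d n → A) = Fintype.card A ^ n ^ d := by
  simp

theorem topEnt_univ [Fintype A] [Nonempty A] :
    topEnt (Set.univ : Set (Cfg d A)) = Real.log (Fintype.card A) := by
  have : Nonempty {n : ℕ // 1 ≤ n} := ⟨⟨1, le_rfl⟩⟩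
  have term (n : {n : ℕ // 1 ≤ n}) :
      ((n.1 : ℝ) ^ d)⁻¹ * Real.log (langE (Set.univ : Set (Cfg d A)) n.1).ncard =
        Real.log (Fintype.card A) := by
    have full : langE (Set.univ : Set (Cfg d A)) n.1 = Set.univ := Set.eq_univ_of_forall fun w => by
      obtain ⟨x, rfl⟩ := pattern_surjective (d := d) n.1 w
      exact pattern_mem_langE (Set.mem_univ x) _
    have hn : (0 : ℝ) < n.1 := by exact_mod_cast n.2
    rw [full, Set.ncard_univ, Nat.card_eq_fintype_card, card_pattern]
    push_cast
    rw [Real.log_pow]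
    push_cast
    field_simp
  simp only [topEnt, term, ciInf_const]

theorem ncard_langE_pos [Finite A] (hX₀ : X₀.Nonempty) (n : ℕ) : 0 < (langE X₀ n).ncard := by
  obtain ⟨x, hx⟩ := hX₀
  exact (Set.ncard_pos (Set.toFinite _)).2 ⟨_, pattern_mem_langE hx n⟩

theorem ncard_langE_mul_le [Finite A] (hinv : ∀ n : Fin d → ℤ, ∀ x ∈ X₀, shift n x ∈ X₀)
    (r n : ℕ) :
    (langE X₀ (r * n)).ncard ≤ (langE X₀ n).ncard ^ r ^ d := by
  have := Fintype.ofFinite A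
  have block_mem : Set.MapsTo block (langE X₀ (r * n)) {v | ∀ i : Box d r, v i ∈ langE X₀ n} := by
    intro w hw i
    obtain ⟨x, hx, rfl⟩ := mem_langE.1 hw
    rw [block_pattern]
    exact pattern_mem_langE (hinv _ x hx) n
  have card_pi : {v : Box d r → Box d n → A | ∀ i, v i ∈ langE X₀ n}.ncard =
      (langE X₀ n).ncard ^ r ^ d := by
    rw [show {v : Box d r → Box d n → A | ∀ i, v i ∈ langE X₀ n} =
      (Fintype.piFinset fun _ => (langE X₀ n).toFinset : Finset (Box d r → Box d n → A)) by
        ext v; simp, Set.ncard_coe_finset, Fintype.card_piFinset]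
    simp [Set.ncard_eq_toFinset_card']
  rw [← card_pi]
  exact Set.ncard_le_ncard_of_injOn block block_mem (block_bijective r n).injective.injOn
    (Set.toFinite _)

theorem tendsto_log_ncard_langE [Finite A] [TopologicalSpace A] (hsub : IsSubshift X₀) :
    Tendsto (fun j => ((scale j : ℝ) ^ d)⁻¹ * Real.log (langE X₀ (scale j)).ncard) atTop
      (𝓝 (topEnt X₀)) := by
  refine tendsto_scale_iInf_div_pow d (a := fun n => Real.log (langE X₀ n).ncard)
    (fun n => Real.log_natCast_nonneg _) fun r n => ?_
  have hcard : ((langE X₀ (r * n)).ncard : ℝ) ≤ ((langE X₀ n).ncard : ℝ) ^ r ^ d := by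
    exact_mod_cast ncard_langE_mul_le hsub.2.2 r n
  simpa using Real.log_le_log (by exact_mod_cast ncard_langE_pos hsub.1 _) hcard

theorem topEnt_lt_log_card [Fintype A] [TopologicalSpace A] (hsub : IsSubshift X₀)
    (hproper : X₀ ≠ Set.univ) :
    topEnt X₀ < Real.log (Fintype.card A) := by
  obtain ⟨x, hx⟩ := (Set.ne_univ_iff_exists_notMem X₀).1 hproper
  obtain ⟨R, hR⟩ := exists_forall_mem_illegal hsub hx
  obtain ⟨s, hs⟩ := hR (2 * R + 1) le_rfl
  set n := 2 * R + 1
  refine (topEnt_le X₀ (n := n) (by lia)).trans_lt ((inv_mul_lt_iff₀ (by positivity)).2 ?_)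
  have hcard : (langE X₀ n).ncard < Fintype.card A ^ n ^ d := by
    rw [← card_pattern, ← Nat.card_eq_fintype_card, ← Set.ncard_univ]
    exact Set.ncard_lt_ncard (Set.ssubset_univ_iff.2 fun h => hs (h ▸ trivial))
  calc Real.log (langE X₀ n).ncard
      < Real.log ((Fintype.card A : ℝ) ^ n ^ d) :=
        Real.log_lt_log (by exact_mod_cast ncard_langE_pos hsub.1 n) (by exact_mod_cast hcard)
    _ = (n : ℝ) ^ d * Real.log (Fintype.card A) := by
        rw [Real.log_pow]
        push_cast
        rfl

end Languages

section Entropy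

variable {d : ℕ} {A : Type} [Fintype A] [MeasurableSpace A]

/-- The Shannon entropy of the distribution of `x|_{E_n}` under `μ`. -/
noncomputable def blockEntropy (n : ℕ) (μ : Measure (Cfg d A)) : ℝ :=
  ∑ w : Box d n → A, Real.negMulLog (μ.real (cylE n w))

section Bounds

variable (μ : Measure (Cfg d A)) [IsProbabilityMeasure μ]

theorem blockEntropy_nonneg (n : ℕ) : 0 ≤ blockEntropy n μ :=
  Finset.sum_nonneg fun _ _ => Real.negMulLog_nonneg measureReal_nonneg measureReal_le_one

theorem entropy_le {n : ℕ} (hn : 1 ≤ n) : entropy μ ≤ ((n : ℝ) ^ d)⁻¹ * blockEntropy n μ :=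
  ciInf_le (f := fun n : {n : ℕ // 1 ≤ n} => ((n.1 : ℝ) ^ d)⁻¹ * blockEntropy n.1 μ)
    ⟨0, by
      rintro _ ⟨n, rfl⟩
      exact mul_nonneg (by positivity) (blockEntropy_nonneg μ _)⟩ ⟨n, hn⟩

end Bounds

theorem le_entropy {μ : Measure (Cfg d A)} {c : ℝ}
    (h : ∀ n : ℕ, 1 ≤ n → c ≤ ((n : ℝ) ^ d)⁻¹ * blockEntropy n μ) : c ≤ entropy μ :=
  have : Nonempty {n : ℕ // 1 ≤ n} := ⟨⟨1, le_rfl⟩⟩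
  le_ciInf fun n => h n.1 n.2

theorem blockEntropy_eq_log_ncard {n : ℕ} {S : Set (Box d n → A)} (hS : S.Nonempty)
    {ν : Measure (Cfg d A)}
    (hν : ∀ w, ν.real (cylE n w) = if w ∈ S then (S.ncard : ℝ)⁻¹ else 0) :
    blockEntropy n ν = Real.log S.ncard := by
  have hcard : (S.ncard : ℝ) ≠ 0 := by
    exact_mod_cast ((Set.ncard_pos (Set.toFinite S)).2 hS).ne'
  calc blockEntropy n ν
      = ∑ _w ∈ S.toFinset, Real.negMulLog (S.ncard : ℝ)⁻¹ := by
        rw [← Set.filter_mem_univ_eq_toFinset, Finset.sum_filter]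
        simp only [blockEntropy, hν, apply_ite Real.negMulLog, Real.negMulLog_zero]
    _ = Real.log S.ncard := by
        rw [Finset.sum_const, nsmul_eq_mul, ← Set.ncard_eq_toFinset_card', Real.negMulLog,
          Real.log_inv, neg_mul_neg, mul_inv_cancel_left₀ hcard]

variable [MeasurableSingletonClass A] {μ : Measure (Cfg d A)}

section WeakLimits

variable [TopologicalSpace A] [DiscreteTopology A] {ι : Type*} {L : Filter ι}
  {μs : ι → Measure (Cfg d A)}

theorem tendsto_blockEntropy
    (hlim : ∀ f : Cfg d A → ℝ, Continuous f →
      Tendsto (fun k => ∫ x, f x ∂(μs k)) L (𝓝 (∫ x, f x ∂μ))) (n : ℕ) :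
    Tendsto (fun k => blockEntropy n (μs k)) L (𝓝 (blockEntropy n μ)) := by
  refine tendsto_finsetSum _ fun w _ => (Real.continuous_negMulLog.tendsto _).comp ?_
  simpa only [← measureReal_cylE_eq_integral] using
    hlim _ (continuous_comp_pattern n fun v => if v = w then (1 : ℝ) else 0)

theorem le_entropy_of_tendsto [L.NeBot]
    (hlim : ∀ f : Cfg d A → ℝ, Continuous f →
      Tendsto (fun k => ∫ x, f x ∂(μs k)) L (𝓝 (∫ x, f x ∂μ))) {c : ι → ℝ} {h : ℝ}
    (hc : Tendsto c L (𝓝 h))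
    (hle : ∀ n : ℕ, 1 ≤ n → ∃ e : ι → ℝ, Tendsto e L (𝓝 0) ∧
      ∀ᶠ k in L, c k ≤ ((n : ℝ) ^ d)⁻¹ * blockEntropy n (μs k) + e k) : h ≤ entropy μ := by
  refine le_entropy fun n hn => ?_
  obtain ⟨e, he, hle⟩ := hle n hn
  simpa using le_of_tendsto_of_tendsto hc
    (((tendsto_blockEntropy hlim n).const_mul _).add he) hle

end WeakLimits

variable [IsProbabilityMeasure μ]

theorem blockEntropy_eq_integral (μ : Measure (Cfg d A)) [IsProbabilityMeasure μ] (n : ℕ) :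
    blockEntropy n μ = ∫ x, -Real.log (μ.real (cylE n (pattern n x))) ∂μ := by
  rw [integral_comp_pattern μ n fun w => -Real.log (μ.real (cylE n w))]
  exact Finset.sum_congr rfl fun w _ => by rw [Real.negMulLog, neg_mul_comm]

theorem blockEntropy_le_integral {n : ℕ} {W : (Box d n → A) → ℝ} (hW : ∀ w, 0 ≤ W w)
    (hpos : ∀ w, 0 < μ.real (cylE n w) → 0 < W w) :
    blockEntropy n μ ≤ ∫ x, -Real.log (W (pattern n x)) ∂μ + Real.log (∑ w, W w) := by
  rw [integral_comp_pattern μ n fun w => -Real.log (W w)]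
  exact gibbs_inequality (fun _ => measureReal_nonneg) hW hpos (sum_measureReal_cylE μ n)

theorem blockEntropy_le_sum_integral {ι : Type*} [Fintype ι] {n : ℕ}
    {F : ι → (Box d n → A) → ℝ} (hF : ∀ i w, 0 ≤ F i w)
    (hpos : ∀ w, 0 < μ.real (cylE n w) → ∀ i, 0 < F i w) :
    blockEntropy n μ ≤
      ∑ i, ∫ x, -Real.log (F i (pattern n x)) ∂μ + Real.log (∑ w, ∏ i, F i w) := by
  have log_prod (w : Box d n → A) : μ.real (cylE n w) * -Real.log (∏ i, F i w) =
      μ.real (cylE n w) * ∑ i, -Real.log (F i w) := by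
    rcases (measureReal_nonneg (μ := μ) (s := cylE n w)).eq_or_lt with h | h
    · simp [← h]
    · rw [Real.log_prod fun i _ => (hpos w h i).ne', Finset.sum_neg_distrib]
  calc blockEntropy n μ
      ≤ ∫ x, -Real.log (∏ i, F i (pattern n x)) ∂μ + Real.log (∑ w, ∏ i, F i w) :=
        blockEntropy_le_integral (W := fun w => ∏ i, F i w)
          (fun w => Finset.prod_nonneg fun i _ => hF i w)
          fun w hw => Finset.prod_pos fun i _ => hpos w hw i
    _ = ∑ i, ∫ x, -Real.log (F i (pattern n x)) ∂μ + Real.log (∑ w, ∏ i, F i w) := by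
        rw [integral_comp_pattern μ n fun w => -Real.log (∏ i, F i w),
          Finset.sum_congr rfl fun w _ => log_prod w,
          ← integral_comp_pattern μ n fun w => ∑ i, -Real.log (F i w),
          integral_finsetSum _ fun i _ => integrable_comp_pattern μ n fun w => -Real.log (F i w)]

theorem blockEntropy_mul_le (hμ : Invariant μ) (r n : ℕ) :
    blockEntropy (r * n) μ ≤ (r : ℝ) ^ d * blockEntropy n μ := by
  let p : (Box d n → A) → ℝ := fun u => μ.real (cylE n u)
  have p_pos (w : Box d (r * n) → A) (hw : 0 < μ.real (cylE (r * n) w)) (i : Box d r) :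
      0 < p (block w i) := by
    refine hw.trans_le (ENNReal.toReal_mono (measure_ne_top _ _) ?_)
    rw [← hμ.measure_preimage_shift ((n : ℤ) • toSite i) (measurableSet_cylE n _)]
    refine measure_mono fun x hx => ?_
    rw [cylE_eq_preimage, Set.mem_preimage, Set.mem_singleton_iff] at hx
    simp [cylE_eq_preimage, ← hx, block_pattern]
  have term (i : Box d r) :
      ∫ x, -Real.log (p (block (pattern (r * n) x) i)) ∂μ = blockEntropy n μ := by
    simp only [block_pattern]
    rw [hμ.integral_comp_shift _ (f := fun x => -Real.log (p (pattern n x)))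
      (integrable_comp_pattern μ n fun u => -Real.log (p u)).aestronglyMeasurable,
      ← blockEntropy_eq_integral]
  have total : ∑ w : Box d (r * n) → A, ∏ i, p (block w i) = 1 := by
    rw [sum_prod_block, sum_measureReal_cylE, one_pow]
  have := blockEntropy_le_sum_integral (F := fun (i : Box d r) w => p (block w i))
    (fun _ _ => measureReal_nonneg) p_pos
  simpa [term, total] using this

theorem tendsto_blockEntropy_scale (hμ : Invariant μ) :
    Tendsto (fun j => ((scale j : ℝ) ^ d)⁻¹ * blockEntropy (scale j) μ) atTop
      (𝓝 (entropy μ)) :=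
  tendsto_scale_iInf_div_pow d (a := fun n => blockEntropy n μ) (blockEntropy_nonneg μ)
    (blockEntropy_mul_le hμ)

theorem blockEntropy_le_log_ncard_langE {X₀ : Set (Cfg d A)} (hX₀ : μ X₀ = 1) (n : ℕ) :
    blockEntropy n μ ≤ Real.log (langE X₀ n).ncard := by
  have mem_of_pos (w : Box d n → A) (hw : 0 < μ.real (cylE n w)) : w ∈ langE X₀ n := by
    by_contra hw'
    have hdisj : Disjoint X₀ (cylE n w) :=
      Set.disjoint_left.2 fun x hx hxw => hw' ⟨x, hx, hxw⟩
    have hunion := prob_le_one (μ := μ) (s := X₀ ∪ cylE n w)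
    rw [measure_union hdisj (measurableSet_cylE n w), hX₀] at hunion
    exact hw.ne' <| (measureReal_eq_zero_iff).2 <| nonpos_iff_eq_zero.1 <|
      (ENNReal.add_le_add_iff_left ENNReal.one_ne_top).1 (hunion.trans_eq (add_zero 1).symm)
  have := blockEntropy_le_integral (μ := μ) (W := fun w => if w ∈ langE X₀ n then 1 else 0)
    (fun w => by positivity) (fun w hw => by simp [mem_of_pos w hw])
  simpa [apply_ite Real.log, Set.ncard_eq_toFinset_card'] using this

theorem entropy_le_topEnt {X₀ : Set (Cfg d A)} (hX₀ : μ X₀ = 1) : entropy μ ≤ topEnt X₀ :=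
  have : Nonempty {n : ℕ // 1 ≤ n} := ⟨⟨1, le_rfl⟩⟩
  le_ciInf fun n => (entropy_le μ n.2).trans <|
    mul_le_mul_of_nonneg_left (blockEntropy_le_log_ncard_langE hX₀ n.1) (by positivity)

end Entropy

section VariationalPrinciple

variable {d : ℕ} {A : Type}

theorem sum_toSite_add (M : ℕ) (e : Fin d → ℤ) (G : (Fin d → ℤ) → ℝ) :
    ∑ s : Box d M, G (toSite s + e) =
      ∑ v ∈ Fintype.piFinset fun i => Finset.Ico (e i) (M + e i), G v := by
  refine Finset.sum_nbij (fun s => toSite s + e) (fun s _ => ?_) (fun s _ s' _ h => ?_)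
    (fun v hv => ?_) fun s _ => rfl
  · simp only [Fintype.mem_piFinset, Finset.mem_Ico, Pi.add_apply, toSite]
    exact fun i => by have := (s i).2; lia
  · funext i
    have := congrFun h i
    simp only [Pi.add_apply, toSite] at this
    exact Fin.ext (by lia)
  · simp only [Finset.mem_coe, Fintype.mem_piFinset, Finset.mem_Ico] at hv
    refine ⟨fun i => ⟨(v i - e i).toNat, by have := hv i; lia⟩, by simp, funext fun i => ?_⟩
    have := hv i
    simp only [Pi.add_apply, toSite]
    lia

theorem abs_sum_toSite_add_sub_le {M R : ℕ} (hR : 2 * R ≤ M) {e : Fin d → ℤ}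
    (he : ∀ i, (e i).natAbs ≤ R) {G : (Fin d → ℤ) → ℝ} {B : ℝ} (hB : ∀ v, |G v| ≤ B) :
    |∑ s : Box d M, G (toSite s + e) -
        ∑ v ∈ Fintype.piFinset fun _ : Fin d => Finset.Ico (R : ℤ) (M - R), G v| ≤
      B * ((M : ℝ) ^ d - ((M : ℝ) - 2 * R) ^ d) := by
  have inner_subset : Fintype.piFinset (fun _ : Fin d => Finset.Ico (R : ℤ) (M - R)) ⊆
      Fintype.piFinset fun i => Finset.Ico (e i) (M + e i) := by
    refine Fintype.piFinset_subset _ _ fun i z hz => ?_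
    rw [Finset.mem_Ico] at *
    have := he i
    lia
  have width : ((M : ℤ) - R - R).toNat = M - 2 * R := by lia
  rw [sum_toSite_add, ← Finset.sum_sdiff inner_subset, add_sub_cancel_right]
  calc |∑ v ∈ Fintype.piFinset (fun i => Finset.Ico (e i) (M + e i)) \
        Fintype.piFinset fun _ : Fin d => Finset.Ico (R : ℤ) (M - R), G v|
      ≤ _ • B := (Finset.abs_sum_le_sum_abs _ _).trans
          (Finset.sum_le_card_nsmul _ _ B fun v _ => hB v)
    _ = B * ((M : ℝ) ^ d - ((M : ℝ) - 2 * R) ^ d) := by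
        rw [nsmul_eq_mul, mul_comm, Finset.cast_card_sdiff inner_subset]
        simp [Fintype.card_piFinset, width, Nat.cast_sub hR]

variable [MeasurableSpace A]

/-- The average of the translates of `ν` by the sites of `E_M`; it is almost invariant. -/
noncomputable def boxAverage (M : ℕ) (ν : Measure (Cfg d A)) : Measure (Cfg d A) :=
  ((M : ℝ≥0∞) ^ d)⁻¹ • ∑ s : Box d M, ν.map (shift (toSite s))

theorem boxAverage_apply {M : ℕ} (ν : Measure (Cfg d A)) {S : Set (Cfg d A)}
    (hS : MeasurableSet S) :
    boxAverage M ν S = ((M : ℝ≥0∞) ^ d)⁻¹ * ∑ s : Box d M, ν (shift (toSite s) ⁻¹' S) := by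
  simp [boxAverage, Measure.map_apply (measurable_shift _) hS]

theorem boxAverage_apply_eq_one {M : ℕ} (hM : 1 ≤ M) {ν : Measure (Cfg d A)} {S : Set (Cfg d A)}
    (hS : MeasurableSet S) (h : ∀ s : Box d M, ν (shift (toSite s) ⁻¹' S) = 1) :
    boxAverage M ν S = 1 := by
  have hM' : (M : ℝ≥0∞) ≠ 0 := by exact_mod_cast (by lia : M ≠ 0)
  simp only [boxAverage_apply ν hS, h, Finset.sum_const, Finset.card_univ, nsmul_eq_mul, mul_one,
    Fintype.card_pi, Finset.prod_const, Fintype.card_fin, Nat.cast_pow]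
  exact ENNReal.inv_mul_cancel (pow_ne_zero _ hM') (by finiteness)

theorem isProbabilityMeasure_boxAverage {M : ℕ} (hM : 1 ≤ M) (ν : Measure (Cfg d A))
    [IsProbabilityMeasure ν] : IsProbabilityMeasure (boxAverage M ν) :=
  ⟨boxAverage_apply_eq_one hM .univ fun _ => by simp⟩

theorem boxAverage_apply_ne_zero {M : ℕ} {ν : Measure (Cfg d A)} {S : Set (Cfg d A)}
    (hS : MeasurableSet S) (s : Box d M) (h : ν (shift (toSite s) ⁻¹' S) ≠ 0) :
    boxAverage M ν S ≠ 0 := by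
  rw [boxAverage_apply ν hS]
  refine mul_ne_zero (by simp) fun hsum => h ?_
  exact Finset.sum_eq_zero_iff.1 hsum s (Finset.mem_univ s)

variable [TopologicalSpace A]

theorem boxAverage_apply_subshift [BorelSpace (Cfg d A)] {X₀ : Set (Cfg d A)} (hsub : IsSubshift X₀)
    {M : ℕ} (hM : 1 ≤ M) {ν : Measure (Cfg d A)} [IsProbabilityMeasure ν] (hν : ν X₀ = 1) :
    boxAverage M ν X₀ = 1 :=
  boxAverage_apply_eq_one hM hsub.2.1.measurableSet fun s =>
    le_antisymm prob_le_one (hν.symm.le.trans (measure_mono (hsub.2.2 (toSite s))))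

section WeakLimits

variable [Finite A] [DiscreteTopology A] [BorelSpace A]

theorem integral_boxAverage (M : ℕ) (ν : Measure (Cfg d A)) [IsFiniteMeasure ν] {f : Cfg d A → ℝ}
    (hf : Continuous f) :
    ∫ x, f x ∂(boxAverage M ν) =
      ((M : ℝ) ^ d)⁻¹ * ∑ s : Box d M, ∫ x, f (shift (toSite s) x) ∂ν := by
  rw [boxAverage, integral_smul_measure, integral_finsetSum_measure fun s _ =>
    integrable_of_continuous hf _]
  simp [integral_map (measurable_shift _).aemeasurable hf.measurable.aestronglyMeasurable]

theorem abs_integral_comp_shift_sub_boxAverage_le {M R : ℕ} (hM : 1 ≤ M) (hR : 2 * R ≤ M)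
    {e : Fin d → ℤ} (he : ∀ i, (e i).natAbs ≤ R) (ν : Measure (Cfg d A)) [IsProbabilityMeasure ν]
    {f : Cfg d A → ℝ} (hf : Continuous f) {B : ℝ} (hB : ∀ x, |f x| ≤ B) :
    |∫ x, f (shift e x) ∂(boxAverage M ν) - ∫ x, f x ∂(boxAverage M ν)| ≤
      2 * B * (1 - (1 - 2 * R * (M : ℝ)⁻¹) ^ d) := by
  have : (0 : ℝ) < M := by exact_mod_cast hM
  set G : (Fin d → ℤ) → ℝ := fun v => ∫ x, f (shift v x) ∂ν
  have hG (v) : |G v| ≤ B := by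
    simpa using norm_integral_le_of_norm_le_const (μ := ν) (f := fun x => f (shift v x))
      (.of_forall fun x => hB (shift v x))
  have moved := abs_le.1 (abs_sum_toSite_add_sub_le hR he hG)
  have fixed := abs_le.1 (abs_sum_toSite_add_sub_le hR (e := 0) (by simp) hG)
  simp only [add_zero] at fixed
  rw [integral_boxAverage M ν (f := fun x => f (shift e x)) (hf.comp (continuous_shift e)),
    integral_boxAverage M ν hf, ← mul_sub,
    abs_mul, abs_of_pos (by positivity), inv_mul_le_iff₀ (by positivity)]
  have factor : (M : ℝ) ^ d * (2 * B * (1 - (1 - 2 * R * (M : ℝ)⁻¹) ^ d)) =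
      2 * (B * ((M : ℝ) ^ d - ((M : ℝ) - 2 * R) ^ d)) := by
    have : (M : ℝ) - 2 * R = M * (1 - 2 * R * (M : ℝ)⁻¹) := by field_simp
    rw [this, mul_pow]
    ring
  rw [factor]
  simp only [shift_shift]
  exact abs_le.2 ⟨by linarith, by linarith⟩

theorem invariant_of_integral_comp_shift {μ : Measure (Cfg d A)} [IsFiniteMeasure μ]
    (h : ∀ (e : Fin d → ℤ) (f : Cfg d A → ℝ), Continuous f →
      ∫ x, f (shift e x) ∂μ = ∫ x, f x ∂μ) : Invariant μ := fun e => by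
  have := Measure.isFiniteMeasure_map μ (shift e)
  refine ext_of_forall_integral_eq_of_IsFiniteMeasure fun f => ?_
  rw [integral_map (measurable_shift e).aemeasurable
    f.continuous.measurable.aestronglyMeasurable, h e f f.continuous]

theorem exists_invariant_tendsto_boxAverage (ν : ℕ → Measure (Cfg d A))
    [∀ k, IsProbabilityMeasure (ν k)] :
    ∃ μ : Measure (Cfg d A), IsProbabilityMeasure μ ∧ Invariant μ ∧
      ∀ f : Cfg d A → ℝ, Continuous f →
        Tendsto (fun k => ∫ x, f x ∂(boxAverage (scale k) (ν k))) (hyperfilter ℕ)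
          (𝓝 (∫ x, f x ∂μ)) := by
  obtain ⟨⟨μ, hμ⟩, hlim⟩ := exists_tendsto_integral_ultrafilter (hyperfilter ℕ)
    fun k => (⟨_, isProbabilityMeasure_boxAverage (scale_pos k) (ν k)⟩ :
      ProbabilityMeasure (Cfg d A))
  simp only [ProbabilityMeasure.coe_mk] at hlim
  refine ⟨μ, hμ, invariant_of_integral_comp_shift fun e f hf => ?_, hlim⟩
  obtain ⟨B, hB⟩ := exists_abs_le_of_continuous hf
  let R := Finset.univ.sup fun i => (e i).natAbs
  have he (i) : (e i).natAbs ≤ R := Finset.le_sup (f := fun i => (e i).natAbs) (Finset.mem_univ i)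
  refine sub_eq_zero.1 (tendsto_nhds_unique
    ((hlim _ (hf.comp (continuous_shift e))).sub (hlim f hf)) ?_)
  refine squeeze_zero_norm' (a := fun k => 2 * B * (1 - (1 - 2 * R * (scale k : ℝ)⁻¹) ^ d)) ?_ ?_
  · filter_upwards [Nat.hyperfilter_le_atTop (eventually_ge_atTop (2 * R))] with k hk
    exact abs_integral_comp_shift_sub_boxAverage_le (scale_pos k) (hk.trans (lt_scale k).le) he _
      hf hB
  · simpa using
      ((tendsto_one_sub_pow_scale (2 * R) d).mono_left Nat.hyperfilter_le_atTop).const_mul (2 * B)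

end WeakLimits

variable [Fintype A] [DiscreteTopology A] [BorelSpace A]

section BlockEntropy

variable (ν : Measure (Cfg d A)) [IsProbabilityMeasure ν]

theorem blockEntropy_le_sum_blocks {N q : ℕ} (hq : 1 ≤ q) (t : Box d q) :
    blockEntropy (N * q + q) ν ≤
      ∑ i : Box d N, ∫ x, -Real.log ((boxAverage (N * q + q) ν).real
        (cylE q (pattern q (shift ((q : ℤ) • toSite i + toSite t) x)))) ∂ν +
      (((N * q + q : ℕ) : ℝ) ^ d - ((N * q : ℕ) : ℝ) ^ d) * Real.log (Fintype.card A) := by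
  have := isProbabilityMeasure_boxAverage (M := N * q + q) (by lia) ν
  set p : (Box d q → A) → ℝ := fun u => (boxAverage (N * q + q) ν).real (cylE q u)
  have site_block (i : Box d N) (x : Cfg d A) : block (pattern (N * q + q) x ∘ boxAdd t) i =
      pattern q (shift ((q : ℤ) • toSite i + toSite t) x) := by
    rw [pattern_comp_boxAdd, block_pattern, shift_shift, add_comm]
  have p_pos (w : Box d (N * q + q) → A) (hw : 0 < ν.real (cylE (N * q + q) w)) (i : Box d N) :
      0 < p (block (w ∘ boxAdd t) i) := by
    let s : Box d (N * q + q) := fun c => Fin.castAdd q (boxMulEquiv d N q (i, t) c)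
    have hs : toSite s = (q : ℤ) • toSite i + toSite t := toSite_boxMulEquiv i t
    refine ENNReal.toReal_pos (boxAverage_apply_ne_zero (measurableSet_cylE q _) s fun h => ?_)
      (measure_ne_top _ _)
    refine hw.ne' ((measureReal_eq_zero_iff).2 (measure_mono_null (fun x hx => ?_) h))
    rw [cylE_eq_preimage, Set.mem_preimage, Set.mem_singleton_iff] at hx
    rw [Set.mem_preimage, cylE_eq_preimage, ← hx, site_block, hs]
    rfl
  have total : ∑ w : Box d (N * q + q) → A, ∏ i, p (block (w ∘ boxAdd t) i) =
      (Fintype.card A : ℝ) ^ ((N * q + q) ^ d - (N * q) ^ d) := by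
    rw [sum_comp_of_injective (boxAdd_injective t) fun v => ∏ i, p (block v i), sum_prod_block,
      sum_measureReal_cylE]
    simp
  have gibbs := blockEntropy_le_sum_integral
    (F := fun (i : Box d N) w => p (block (w ∘ boxAdd t) i)) (fun _ _ => measureReal_nonneg) p_pos
  simp only [site_block, total, Real.log_pow] at gibbs
  rwa [Nat.cast_sub (Nat.pow_le_pow_left (by lia) d), Nat.cast_pow, Nat.cast_pow] at gibbs

theorem pow_mul_blockEntropy_le_boxAverage {N q : ℕ} (hq : 1 ≤ q) :
    (q : ℝ) ^ d * blockEntropy (N * q + q) ν ≤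
      ((N * q + q : ℕ) : ℝ) ^ d * blockEntropy q (boxAverage (N * q + q) ν) +
        (q : ℝ) ^ d * ((((N * q + q : ℕ) : ℝ) ^ d - ((N * q : ℕ) : ℝ) ^ d) *
          Real.log (Fintype.card A)) := by
  set M := N * q + q
  have hM : 1 ≤ M := by lia
  have := isProbabilityMeasure_boxAverage hM ν
  let h : Cfg d A → ℝ := fun x => -Real.log ((boxAverage M ν).real (cylE q (pattern q x)))
  have h_nonneg (x) : 0 ≤ h x :=
    neg_nonneg.2 (Real.log_nonpos measureReal_nonneg measureReal_le_one)
  let G : (Fin d → ℤ) → ℝ := fun v => ∫ x, h (shift v x) ∂ν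
  have sum_G : ∑ s : Box d (N * q), G (toSite s) ≤
      (M : ℝ) ^ d * blockEntropy q (boxAverage M ν) := by
    have : (0 : ℝ) < M := by exact_mod_cast hM
    rw [blockEntropy_eq_integral, integral_boxAverage M ν (f := h)
      (continuous_comp_pattern q fun u => -Real.log ((boxAverage M ν).real (cylE q u))),
      mul_inv_cancel_left₀ (by positivity)]
    exact sum_toSite_le_of_le (by lia) fun v => integral_nonneg fun x => h_nonneg _
  -- sum the block bound over the `q ^ d` positions `t` of the tiling
  have summed := Finset.sum_le_sum fun t (_ : t ∈ Finset.univ) =>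
    blockEntropy_le_sum_blocks ν (N := N) hq t
  rw [Finset.sum_add_distrib, Finset.sum_comm, sum_toSite_mul N q G] at summed
  simp only [Finset.sum_const, Finset.card_univ, nsmul_eq_mul, Fintype.card_pi,
    Finset.prod_const, Fintype.card_fin, Nat.cast_pow] at summed
  exact summed.trans (by gcongr)

theorem blockEntropy_le_boxAverage {M q : ℕ} (hM : 1 ≤ M) (hqM : q ∣ M) :
    ((M : ℝ) ^ d)⁻¹ * blockEntropy M ν ≤
      ((q : ℝ) ^ d)⁻¹ * blockEntropy q (boxAverage M ν) +
        (1 - (1 - q * (M : ℝ)⁻¹) ^ d) * Real.log (Fintype.card A) := by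
  obtain ⟨r, rfl⟩ := hqM
  obtain ⟨N, rfl⟩ := Nat.exists_eq_add_one.2 (Nat.pos_of_mul_pos_left hM)
  have hq : 1 ≤ q := Nat.pos_of_mul_pos_right hM
  rw [show q * (N + 1) = N * q + q by ring] at *
  have averaged := pow_mul_blockEntropy_le_boxAverage ν (N := N) hq
  set M := N * q + q with hMdef
  have : (0 : ℝ) < M := by exact_mod_cast hM
  have : (0 : ℝ) < q := by exact_mod_cast hq
  have inner : ((N * q : ℕ) : ℝ) = M * (1 - q * (M : ℝ)⁻¹) := by
    field_simp
    rw [hMdef]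
    push_cast
    ring
  rw [inner, mul_pow] at averaged
  refine le_of_mul_le_mul_left (a := (M : ℝ) ^ d * (q : ℝ) ^ d) ?_ (by positivity)
  calc (M : ℝ) ^ d * (q : ℝ) ^ d * (((M : ℝ) ^ d)⁻¹ * blockEntropy M ν)
      = (q : ℝ) ^ d * blockEntropy M ν := by field_simp
    _ ≤ _ := averaged
    _ = (M : ℝ) ^ d * (q : ℝ) ^ d * (((q : ℝ) ^ d)⁻¹ * blockEntropy q (boxAverage M ν) +
        (1 - (1 - q * (M : ℝ)⁻¹) ^ d) * Real.log (Fintype.card A)) := by field_simp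

end BlockEntropy

theorem exists_blockEntropy_eq_log_ncard_langE {X₀ : Set (Cfg d A)} (hsub : IsSubshift X₀) (n : ℕ) :
    ∃ ν : Measure (Cfg d A), IsProbabilityMeasure ν ∧ ν X₀ = 1 ∧
      blockEntropy n ν = Real.log (langE X₀ n).ncard := by
  have hne : (langE X₀ n).Nonempty := (Set.ncard_pos (Set.toFinite _)).1 (ncard_langE_pos hsub.1 n)
  have : Nonempty (Cfg d A) := ⟨hsub.1.some⟩
  let point : (Box d n → A) → Cfg d A := Function.invFunOn (pattern n) X₀
  have point_mem (w) (hw : w ∈ langE X₀ n) : point w ∈ X₀ :=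
    Function.invFunOn_mem (mem_langE.1 hw)
  have pattern_point (w) (hw : w ∈ langE X₀ n) : pattern n (point w) = w :=
    Function.invFunOn_eq (mem_langE.1 hw)
  let ν : Measure (Cfg d A) := (ProbabilityTheory.uniformOn (langE X₀ n)).map point
  have point_meas : Measurable point := measurable_of_finite point
  have := ProbabilityTheory.isProbabilityMeasure_uniformOn (Set.toFinite (langE X₀ n)) hne
  have hν : IsProbabilityMeasure ν := Measure.isProbabilityMeasure_map point_meas.aemeasurable
  refine ⟨ν, hν, ?_, ?_⟩
  · rw [Measure.map_apply point_meas hsub.2.1.measurableSet]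
    exact ProbabilityTheory.uniformOn_eq_one_of (Set.toFinite _) hne point_mem
  have weight (w : Box d n → A) : ν.real (cylE n w) =
      if w ∈ langE X₀ n then ((langE X₀ n).ncard : ℝ)⁻¹ else 0 := by
    have : langE X₀ n ∩ point ⁻¹' cylE n w = langE X₀ n ∩ {w} := by
      ext u
      simp +contextual [cylE_eq_preimage, pattern_point]
    rw [map_measureReal_apply point_meas (measurableSet_cylE n w), measureReal_def,
      ← ProbabilityTheory.uniformOn_inter_self (Set.toFinite _), this]
    split_ifs with hw
    · rw [Set.inter_eq_right.2 (Set.singleton_subset_iff.2 hw), ProbabilityTheory.uniformOn,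
        ProbabilityTheory.cond_apply (Set.toFinite _).measurableSet,
        Set.inter_eq_right.2 (Set.singleton_subset_iff.2 hw), Measure.count_singleton,
        Measure.count_apply_finite _ (Set.toFinite _), Set.ncard_eq_toFinset_card]
      simp
    · simp [hw]
  exact blockEntropy_eq_log_ncard hne weight

theorem exists_isMME {X₀ : Set (Cfg d A)} (hsub : IsSubshift X₀) : ∃ μ, IsMME X₀ μ := by
  choose ν hν hνX₀ hent using exists_blockEntropy_eq_log_ncard_langE hsub
  obtain ⟨μ, hμ, hinv, hlim⟩ := exists_invariant_tendsto_boxAverage fun k => ν (scale k)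
  have prob (k) := isProbabilityMeasure_boxAverage (scale_pos k) (ν (scale k))
  have hμX₀ : μ X₀ = 1 := measure_eq_one_of_tendsto_integral prob hlim hsub.2.1 fun k =>
    boxAverage_apply_subshift hsub (scale_pos k) (hνX₀ _)
  refine ⟨μ, hμ, hinv, hμX₀, (entropy_le_topEnt hμX₀).antisymm ?_⟩
  refine le_entropy_of_tendsto hlim
    ((tendsto_log_ncard_langE hsub).mono_left Nat.hyperfilter_le_atTop) fun n hn =>
      ⟨fun k => (1 - (1 - n * (scale k : ℝ)⁻¹) ^ d) * Real.log (Fintype.card A), ?_, ?_⟩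
  · simpa using ((tendsto_one_sub_pow_scale n d).mono_left Nat.hyperfilter_le_atTop).mul_const
      (Real.log (Fintype.card A))
  · filter_upwards [Nat.hyperfilter_le_atTop (eventually_ge_atTop n)] with k hk
    rw [← hent]
    exact blockEntropy_le_boxAverage _ (scale_pos k) (dvd_scale hn hk)

end VariationalPrinciple

section Conditioning

open ProbabilityTheory

theorem smul_cond_add_smul_cond_compl {Ω : Type*} [MeasurableSpace Ω] {S : Set Ω}
    (hS : MeasurableSet S) (μ : Measure Ω) [IsFiniteMeasure μ] :
    μ S • μ[|S] + μ Sᶜ • μ[|Sᶜ] = μ := by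
  ext t -
  simpa [mul_comm] using cond_add_cond_compl_eq (t := t) hS μ

theorem integral_eq_integral_cond_add_integral_cond_compl {Ω : Type*} [MeasurableSpace Ω]
    {S : Set Ω} (hS : MeasurableSet S) {μ : Measure Ω} [IsFiniteMeasure μ] {f : Ω → ℝ}
    (hf : Integrable f μ) :
    ∫ x, f x ∂μ = μ.real S * ∫ x, f x ∂μ[|S] + μ.real Sᶜ * ∫ x, f x ∂μ[|Sᶜ] := by
  have hadd := smul_cond_add_smul_cond_compl hS μ
  have hle : μ S • μ[|S] ≤ μ := (Measure.le_add_right le_rfl).trans_eq hadd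
  have hle' : μ Sᶜ • μ[|Sᶜ] ≤ μ := (Measure.le_add_left le_rfl).trans_eq hadd
  conv_lhs => rw [← hadd]
  rw [integral_add_measure (hf.mono_measure hle) (hf.mono_measure hle'), integral_smul_measure,
    integral_smul_measure]
  rfl

variable {d : ℕ} {A : Type} [MeasurableSpace A] {μ : Measure (Cfg d A)} {S : Set (Cfg d A)}

theorem Invariant.cond (hμ : Invariant μ) (hS : MeasurableSet S)
    (hinv : ∀ n : Fin d → ℤ, shift n ⁻¹' S = S) : Invariant μ[|S] := by
  intro n
  ext t ht
  rw [Measure.map_apply (measurable_shift n) ht, cond_apply hS, cond_apply hS,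
    ← hμ.measure_preimage_shift n (hS.inter ht), Set.preimage_inter, hinv n]

variable [Fintype A] [MeasurableSingletonClass A] [IsProbabilityMeasure μ]

theorem blockEntropy_le_cond_add_cond_compl (hS : MeasurableSet S) (n : ℕ)
    (h₀ : μ S ≠ 0) (h₁ : μ Sᶜ ≠ 0) :
    blockEntropy n μ ≤ μ.real S * blockEntropy n μ[|S] + μ.real Sᶜ * blockEntropy n μ[|Sᶜ] +
      (Real.negMulLog (μ.real S) + Real.negMulLog (μ.real Sᶜ)) := by
  have := cond_isProbabilityMeasure h₀
  have := cond_isProbabilityMeasure h₁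
  have split (w : Box d n → A) : μ.real (cylE n w) =
      μ.real S * μ[|S].real (cylE n w) + μ.real Sᶜ * μ[|Sᶜ].real (cylE n w) := by
    simpa [measureReal_cylE_eq_integral] using
      integral_eq_integral_cond_add_integral_cond_compl hS
        (integrable_comp_pattern μ n fun v => if v = w then (1 : ℝ) else 0)
  have expand (a : ℝ) (ν : Measure (Cfg d A)) [IsProbabilityMeasure ν] :
      ∑ w : Box d n → A, Real.negMulLog (a * ν.real (cylE n w)) =
        a * blockEntropy n ν + Real.negMulLog a := by
    simp only [Real.negMulLog_mul, Finset.sum_add_distrib, ← Finset.sum_mul, ← Finset.mul_sum,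
      sum_measureReal_cylE, blockEntropy, one_mul]
    ring
  calc blockEntropy n μ
      ≤ ∑ w : Box d n → A, (Real.negMulLog (μ.real S * μ[|S].real (cylE n w)) +
          Real.negMulLog (μ.real Sᶜ * μ[|Sᶜ].real (cylE n w))) :=
        Finset.sum_le_sum fun w _ => by
          rw [split w]
          exact negMulLog_add_le (by positivity) (by positivity)
    _ = _ := by
        rw [Finset.sum_add_distrib, expand, expand]
        ring

theorem entropy_le_cond_add_cond_compl (hd : 1 ≤ d) (hμ : Invariant μ) (hS : MeasurableSet S)
    (hinv : ∀ n : Fin d → ℤ, shift n ⁻¹' S = S) (h₀ : μ S ≠ 0) (h₁ : μ Sᶜ ≠ 0) :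
    entropy μ ≤ μ.real S * entropy μ[|S] + μ.real Sᶜ * entropy μ[|Sᶜ] := by
  have := cond_isProbabilityMeasure h₀
  have := cond_isProbabilityMeasure h₁
  have hinv' (n : Fin d → ℤ) : shift n ⁻¹' Sᶜ = Sᶜ := by rw [Set.preimage_compl, hinv n]
  have limit := (((tendsto_blockEntropy_scale (hμ.cond hS hinv)).const_mul (μ.real S)).add
    ((tendsto_blockEntropy_scale (hμ.cond hS.compl hinv')).const_mul (μ.real Sᶜ))).add
    ((tendsto_inv_pow_scale hd).mul_const
      (Real.negMulLog (μ.real S) + Real.negMulLog (μ.real Sᶜ)))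
  rw [zero_mul, add_zero] at limit
  refine ge_of_tendsto' limit fun j => (entropy_le μ (scale_pos j)).trans <|
    (mul_le_mul_of_nonneg_left (blockEntropy_le_cond_add_cond_compl hS (scale j) h₀ h₁)
      (by positivity)).trans_eq ?_
  ring

end Conditioning

section Penalty

variable {d : ℕ} {A : Type} [Fintype A] {X₀ : Set (Cfg d A)}

/-- The rate, in excess of the topological entropy, at which a code that singles out one of the
patterns of `X₀` on `E_n` spends its budget; `log |𝒜| + 2 log 2` is the overhead of that code. -/
noncomputable def penaltyRate (X₀ : Set (Cfg d A)) (n : ℕ) : ℝ :=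
  ((n : ℝ) ^ d)⁻¹ * (Real.log (langE X₀ n).ncard + Real.log (Fintype.card A) + 2 * Real.log 2) -
    topEnt X₀

/-- A nonnegative function vanishing exactly on `X₀`: the largest of the rates at the factorial
scales `scale j` for which some translate of `E_{scale (j + 1)}` containing the origin carries a
pattern foreign to `X₀`. -/
noncomputable def penalty (X₀ : Set (Cfg d A)) (x : Cfg d A) : ℝ :=
  ⨆ j, (illegal X₀ (scale (j + 1))).indicator (fun _ => penaltyRate X₀ (scale j)) x

theorem pow_mul_topEnt_add_penaltyRate (X₀ : Set (Cfg d A)) {n : ℕ} (hn : 1 ≤ n) :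
    (n : ℝ) ^ d * (topEnt X₀ + penaltyRate X₀ n) =
      Real.log (langE X₀ n).ncard + Real.log (Fintype.card A) + 2 * Real.log 2 := by
  rw [penaltyRate, add_sub_cancel, mul_inv_cancel_left₀ (by positivity)]

theorem penaltyRate_pos (X₀ : Set (Cfg d A)) {n : ℕ} (hn : 1 ≤ n) : 0 < penaltyRate X₀ n := by
  have hlog : 0 < Real.log (Fintype.card A) + 2 * Real.log 2 := by positivity
  have hinv : 0 < ((n : ℝ) ^ d)⁻¹ := by positivity
  have := topEnt_le X₀ hn
  rw [penaltyRate]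
  nlinarith [mul_pos hinv hlog]

theorem penalty_nonneg (X₀ : Set (Cfg d A)) (x : Cfg d A) : 0 ≤ penalty X₀ x :=
  Real.iSup_nonneg fun j =>
    Set.indicator_nonneg (fun _ _ => (penaltyRate_pos X₀ (scale_pos j)).le) x

section Codes

/-- The length, in nats, of a code word for the pattern of `x` on `E_n` that spends at every site
the topological entropy and the larger of the local penalty and the rate at size `n`. -/
noncomputable def codeLength (X₀ : Set (Cfg d A)) (n : ℕ) (x : Cfg d A) : ℝ :=
  ∑ s : Box d n, (topEnt X₀ + max (penalty X₀ (shift (toSite s) x)) (penaltyRate X₀ n))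

/-- Kraft's inequality for `codeLength X₀ n`, with room to spare: `W` dominates the probabilities
`exp (-codeLength X₀ n x)` assigned by the code to the patterns on `E_n`, and has total mass at most
`1 / 2`. -/
def IsCodeWeight (X₀ : Set (Cfg d A)) (n : ℕ) (W : (Box d n → A) → ℝ) : Prop :=
  (∀ x, Real.exp (-codeLength X₀ n x) ≤ W (pattern n x)) ∧ ∑ w, W w ≤ 1 / 2

theorem log_ncard_langE_le_codeLength (X₀ : Set (Cfg d A)) {n : ℕ} (hn : 1 ≤ n) (x : Cfg d A) :
    Real.log (langE X₀ n).ncard + Real.log (Fintype.card A) + 2 * Real.log 2 ≤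
      codeLength X₀ n x := by
  calc _ = ∑ _s : Box d n, (topEnt X₀ + penaltyRate X₀ n) := by
        rw [← pow_mul_topEnt_add_penaltyRate X₀ hn, Finset.sum_const]
        simp only [Finset.card_univ, Fintype.card_fun, Fintype.card_fin, nsmul_eq_mul,
          Nat.cast_pow]
    _ ≤ codeLength X₀ n x :=
        Finset.sum_le_sum fun s _ => add_le_add_right (le_max_right _ _) _

theorem sum_codeLength_le {r n : ℕ} {x : Cfg d A}
    (hrate : ∀ y ∈ illegal X₀ (r * n), penaltyRate X₀ n ≤ penalty X₀ y)
    (hx : pattern (r * n) x ∉ langE X₀ (r * n)) :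
    ∑ i : Box d r, codeLength X₀ n (shift ((n : ℤ) • toSite i) x) ≤ codeLength X₀ (r * n) x := by
  have hrate' (s : Box d (r * n)) : penaltyRate X₀ n ≤ penalty X₀ (shift (toSite s) x) :=
    hrate _ ⟨s, by rwa [shift_shift, add_neg_cancel, shift_zero]⟩
  simp only [codeLength, shift_shift]
  rw [sum_toSite_mul r n fun v =>
    topEnt X₀ + max (penalty X₀ (shift v x)) (penaltyRate X₀ n)]
  exact Finset.sum_le_sum fun s _ =>
    add_le_add_right ((max_le le_rfl (hrate' s)).trans (le_max_left _ _)) _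

variable [Nonempty A]

theorem exp_neg_codeLength_le (hX₀ : X₀.Nonempty) {n : ℕ} (hn : 1 ≤ n) (x : Cfg d A) :
    Real.exp (-codeLength X₀ n x) ≤ (4 * Fintype.card A * (langE X₀ n).ncard : ℝ)⁻¹ := by
  have hL : (0 : ℝ) < (langE X₀ n).ncard := by exact_mod_cast ncard_langE_pos hX₀ n
  have hA : (0 : ℝ) < Fintype.card A := by exact_mod_cast Fintype.card_pos
  have log_four : Real.log 4 = 2 * Real.log 2 := by
    rw [show (4 : ℝ) = 2 ^ 2 by norm_num, Real.log_pow, Nat.cast_ofNat]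
  rw [← Real.le_log_iff_exp_le (by positivity), Real.log_inv,
    Real.log_mul (by positivity) hL.ne', Real.log_mul four_ne_zero hA.ne', log_four]
  linarith [log_ncard_langE_le_codeLength X₀ hn x]

theorem sum_ite_mem_langE_le (hX₀ : X₀.Nonempty) (n : ℕ) :
    ∑ w, (if w ∈ langE X₀ n then (4 * Fintype.card A * (langE X₀ n).ncard : ℝ)⁻¹ else 0) ≤
      1 / 4 := by
  have hL : (0 : ℝ) < (langE X₀ n).ncard := by exact_mod_cast ncard_langE_pos hX₀ n
  have hA : (1 : ℝ) ≤ Fintype.card A := by exact_mod_cast Fintype.card_pos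
  have hcard : (Finset.univ.filter (· ∈ langE X₀ n)).card = (langE X₀ n).ncard := by
    rw [← Set.ncard_coe_finset, Finset.coe_filter_univ]
    rfl
  rw [← Finset.sum_filter, Finset.sum_const, hcard, nsmul_eq_mul, ← div_eq_mul_inv,
    div_le_iff₀ (by positivity)]
  nlinarith

theorem IsCodeWeight.pos {n : ℕ} {W : (Box d n → A) → ℝ} (hW : IsCodeWeight X₀ n W)
    (w : Box d n → A) : 0 < W w := by
  obtain ⟨x, rfl⟩ := pattern_surjective n w
  exact (Real.exp_pos _).trans_le (hW.1 x)

theorem exists_isCodeWeight_one (hX₀ : X₀.Nonempty) : ∃ W, IsCodeWeight X₀ 1 W := by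
  have hL : (1 : ℝ) ≤ (langE X₀ 1).ncard := by exact_mod_cast ncard_langE_pos hX₀ 1
  have hA : (0 : ℝ) < Fintype.card A := by exact_mod_cast Fintype.card_pos
  refine ⟨fun _ => (4 * Fintype.card A * (langE X₀ 1).ncard : ℝ)⁻¹,
    exp_neg_codeLength_le hX₀ le_rfl, ?_⟩
  rw [Finset.sum_const, Finset.card_univ, card_pattern, one_pow, pow_one, nsmul_eq_mul,
    ← div_eq_mul_inv, div_le_iff₀ (by positivity)]
  nlinarith

-- The new code describes a pattern of `X₀` by its index in the language and any other pattern by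
-- concatenating the descriptions of its blocks.
theorem IsCodeWeight.exists_mul (hd : 1 ≤ d) (hX₀ : X₀.Nonempty) {r n : ℕ} (hr : 2 ≤ r)
    (hn : 1 ≤ n) (hrate : ∀ y ∈ illegal X₀ (r * n), penaltyRate X₀ n ≤ penalty X₀ y)
    {W : (Box d n → A) → ℝ} (hW : IsCodeWeight X₀ n W) :
    ∃ W', IsCodeWeight X₀ (r * n) W' := by
  let c : ℝ := (4 * Fintype.card A * (langE X₀ (r * n)).ncard : ℝ)⁻¹
  have product_pos (w : Box d (r * n) → A) : 0 < ∏ i, W (block w i) :=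
    Finset.prod_pos fun i _ => hW.pos _
  refine ⟨fun w => (if w ∈ langE X₀ (r * n) then c else 0) + ∏ i, W (block w i),
    fun x => ?_, ?_⟩
  · by_cases hx : pattern (r * n) x ∈ langE X₀ (r * n)
    · simp only [if_pos hx]
      exact (exp_neg_codeLength_le hX₀ (Nat.mul_pos (by lia) hn) x).trans
        (le_add_of_nonneg_right (product_pos _).le)
    · simp only [if_neg hx, zero_add]
      calc Real.exp (-codeLength X₀ (r * n) x)
          ≤ ∏ i : Box d r, Real.exp (-codeLength X₀ n (shift ((n : ℤ) • toSite i) x)) := by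
            rw [← Real.exp_sum, Finset.sum_neg_distrib]
            exact Real.exp_le_exp.2 (neg_le_neg (sum_codeLength_le hrate hx))
        _ ≤ ∏ i : Box d r, W (pattern n (shift ((n : ℤ) • toSite i) x)) :=
            Finset.prod_le_prod (fun _ _ => (Real.exp_pos _).le) fun i _ => hW.1 _
        _ = ∏ i, W (block (pattern (r * n) x) i) := by simp only [block_pattern]
  · have product_part : ∑ w : Box d (r * n) → A, ∏ i, W (block w i) ≤ 1 / 4 :=
      calc _ = (∑ w, W w) ^ r ^ d := sum_prod_block W
        _ ≤ (1 / 2) ^ r ^ d :=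
            pow_le_pow_left₀ (Finset.sum_nonneg fun w _ => (hW.pos w).le) hW.2 _
        _ ≤ (1 / 2) ^ 2 := pow_le_pow_of_le_one (by norm_num) (by norm_num)
            (hr.trans (Nat.le_self_pow (by lia) r))
        _ = 1 / 4 := by norm_num
    rw [Finset.sum_add_distrib]
    linarith [sum_ite_mem_langE_le hX₀ (r * n)]

end Codes

variable [TopologicalSpace A]

theorem tendsto_penaltyRate (hd : 1 ≤ d) (hsub : IsSubshift X₀) :
    Tendsto (fun j => penaltyRate X₀ (scale j)) atTop (𝓝 0) := by
  simpa only [penaltyRate, mul_add, zero_mul, add_zero, sub_self] using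
    (((tendsto_log_ncard_langE hsub).add
      ((tendsto_inv_pow_scale hd).mul_const (Real.log (Fintype.card A)))).add
      ((tendsto_inv_pow_scale hd).mul_const (2 * Real.log 2))).sub_const (topEnt X₀)

theorem penaltyRate_le_penalty (hd : 1 ≤ d) (hsub : IsSubshift X₀) {j : ℕ} {x : Cfg d A}
    (hx : x ∈ illegal X₀ (scale (j + 1))) : penaltyRate X₀ (scale j) ≤ penalty X₀ x := by
  have bdd : BddAbove (Set.range fun i =>
      (illegal X₀ (scale (i + 1))).indicator (fun _ => penaltyRate X₀ (scale i)) x) :=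
    (tendsto_penaltyRate hd hsub).bddAbove_range.range_mono _ fun i =>
      Set.indicator_le_self' (fun _ _ => (penaltyRate_pos X₀ (scale_pos i)).le) x
  have hle := le_ciSup bdd j
  rwa [Set.indicator_of_mem hx] at hle

theorem penalty_eq_zero_iff (hd : 1 ≤ d) (hsub : IsSubshift X₀) (x : Cfg d A) :
    penalty X₀ x = 0 ↔ x ∈ X₀ := by
  constructor
  · intro h
    by_contra hx
    obtain ⟨R, hR⟩ := exists_forall_mem_illegal hsub hx
    have hle := penaltyRate_le_penalty hd hsub (hR (scale (2 * R + 1)) (lt_scale _).le)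
    exact (h ▸ hle).not_gt (penaltyRate_pos X₀ (scale_pos _))
  · intro hx
    have hlegal (j : ℕ) : x ∉ illegal X₀ (scale (j + 1)) :=
      Set.disjoint_left.1 (disjoint_illegal hsub _) hx
    simp [penalty, hlegal]

theorem continuous_penalty [DiscreteTopology A] (hd : 1 ≤ d) (hsub : IsSubshift X₀) :
    Continuous (penalty X₀) := by
  have rate_nonneg (j : ℕ) : 0 ≤ penaltyRate X₀ (scale j) :=
    (penaltyRate_pos X₀ (scale_pos j)).le
  exact continuous_iSup_of_le_of_tendsto_zero
    (fun j => continuous_const.indicator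
      (by simp [(isClopen_illegal X₀ (scale (j + 1))).frontier_eq]))
    (fun j => Set.indicator_nonneg fun _ _ => rate_nonneg j)
    (fun j => Set.indicator_le_self' fun _ _ => rate_nonneg j) (tendsto_penaltyRate hd hsub)

theorem exists_isCodeWeight_scale [Nonempty A] (hd : 1 ≤ d) (hsub : IsSubshift X₀) (j : ℕ) :
    ∃ W, IsCodeWeight X₀ (scale j) W := by
  induction j with
  | zero => exact exists_isCodeWeight_one hsub.1
  | succ j ih =>
    obtain ⟨W, hW⟩ := ih
    exact hW.exists_mul hd hsub.1 (by lia) (scale_pos j) fun _ => penaltyRate_le_penalty hd hsub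

variable [DiscreteTopology A]

theorem continuous_codeLength (hd : 1 ≤ d) (hsub : IsSubshift X₀) (n : ℕ) :
    Continuous (codeLength X₀ n) :=
  continuous_finsetSum _ fun _ _ => continuous_const.add <|
    ((continuous_penalty hd hsub).comp (continuous_shift _)).max continuous_const

variable [MeasurableSpace A] [BorelSpace A] {μ : Measure (Cfg d A)} [IsProbabilityMeasure μ]

theorem integral_codeLength_le (hd : 1 ≤ d) (hsub : IsSubshift X₀) (hμ : Invariant μ) {n : ℕ}
    (hn : 1 ≤ n) :
    ∫ x, codeLength X₀ n x ∂μ ≤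
      (n : ℝ) ^ d * (∫ x, penalty X₀ x ∂μ + (topEnt X₀ + penaltyRate X₀ n)) := by
  have shift_int (s : Box d n) : Integrable (fun x => penalty X₀ (shift (toSite s) x)) μ :=
    integrable_of_continuous ((continuous_penalty hd hsub).comp (continuous_shift _)) μ
  have site_int (s : Box d n) : Integrable (fun x =>
      penalty X₀ (shift (toSite s) x) + (topEnt X₀ + penaltyRate X₀ n)) μ :=
    (shift_int s).add (integrable_const _)
  have site_le (x : Cfg d A) (s : Box d n) :
      topEnt X₀ + max (penalty X₀ (shift (toSite s) x)) (penaltyRate X₀ n) ≤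
        penalty X₀ (shift (toSite s) x) + (topEnt X₀ + penaltyRate X₀ n) := by
    have := max_le_add_of_nonneg (penalty_nonneg X₀ (shift (toSite s) x))
      (penaltyRate_pos X₀ hn).le
    linarith
  calc ∫ x, codeLength X₀ n x ∂μ
      ≤ ∫ x, ∑ s : Box d n,
          (penalty X₀ (shift (toSite s) x) + (topEnt X₀ + penaltyRate X₀ n)) ∂μ :=
        integral_mono (integrable_of_continuous (continuous_codeLength hd hsub n) μ)
          (integrable_finsetSum _ fun s _ => site_int s)
          fun x => Finset.sum_le_sum fun s _ => site_le x s
    _ = ∑ _s : Box d n, (∫ x, penalty X₀ x ∂μ + (topEnt X₀ + penaltyRate X₀ n)) := by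
        rw [integral_finsetSum _ fun s _ => site_int s]
        refine Finset.sum_congr rfl fun s _ => ?_
        rw [integral_add (shift_int s) (integrable_const _), hμ.integral_comp_shift _
          (integrable_of_continuous (continuous_penalty hd hsub) μ).aestronglyMeasurable,
          integral_const, probReal_univ, one_smul]
    _ = _ := by
        rw [Finset.sum_const]
        simp only [Finset.card_univ, Fintype.card_fun, Fintype.card_fin, nsmul_eq_mul,
          Nat.cast_pow]

theorem blockEntropy_le_integral_codeLength (hd : 1 ≤ d) (hsub : IsSubshift X₀) (j : ℕ) :
    blockEntropy (scale j) μ ≤ ∫ x, codeLength X₀ (scale j) x ∂μ := by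
  have : Nonempty A := ⟨hsub.1.some 0⟩
  obtain ⟨W, hW⟩ := exists_isCodeWeight_scale hd hsub j
  have log_sum_nonpos : Real.log (∑ w, W w) ≤ 0 :=
    Real.log_nonpos (Finset.sum_nonneg fun w _ => (hW.pos w).le) (hW.2.trans (by norm_num))
  have log_le (x : Cfg d A) : -Real.log (W (pattern (scale j) x)) ≤ codeLength X₀ (scale j) x :=
    neg_le.1 ((Real.le_log_iff_exp_le (hW.pos _)).2 (hW.1 x))
  calc blockEntropy (scale j) μ
      ≤ ∫ x, -Real.log (W (pattern (scale j) x)) ∂μ + Real.log (∑ w, W w) :=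
        blockEntropy_le_integral (fun w => (hW.pos w).le) fun w _ => hW.pos w
    _ ≤ ∫ x, -Real.log (W (pattern (scale j) x)) ∂μ := add_le_of_nonpos_right log_sum_nonpos
    _ ≤ ∫ x, codeLength X₀ (scale j) x ∂μ :=
        integral_mono (integrable_comp_pattern μ _ fun w => -Real.log (W w))
          (integrable_of_continuous (continuous_codeLength hd hsub _) μ) log_le

theorem entropy_le_topEnt_add_integral_penalty (hd : 1 ≤ d) (hsub : IsSubshift X₀)
    (hμ : Invariant μ) : entropy μ ≤ topEnt X₀ + ∫ x, penalty X₀ x ∂μ := by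
  have limit := ((tendsto_penaltyRate hd hsub).const_add (topEnt X₀)).const_add
    (∫ x, penalty X₀ x ∂μ)
  rw [add_zero, add_comm] at limit
  refine ge_of_tendsto' limit fun j => (entropy_le μ (scale_pos j)).trans ?_
  have hpos : (0 : ℝ) < (scale j : ℝ) ^ d := by have := scale_pos j; positivity
  exact (inv_mul_le_iff₀ hpos).2 <| (blockEntropy_le_integral_codeLength hd hsub j).trans
    (integral_codeLength_le hd hsub hμ (scale_pos j))

end Penalty

section Pressure

variable {d : ℕ} {A : Type} [Fintype A] [TopologicalSpace A] [DiscreteTopology A]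
  [MeasurableSpace A] [BorelSpace A] {φ : Cfg d A → ℝ} {β : ℝ} {X₀ : Set (Cfg d A)}
  {μ : Measure (Cfg d A)}

theorem le_pressure [IsProbabilityMeasure μ] (hφ : Continuous φ) (β : ℝ) (hμ : Invariant μ) :
    entropy μ + β * ∫ x, φ x ∂μ ≤ pressure φ β := by
  obtain ⟨B, hB⟩ := exists_abs_le_of_continuous hφ
  refine le_csSup ⟨topEnt (Set.univ : Set (Cfg d A)) + |β| * B, ?_⟩ ⟨μ, ‹_›, hμ, rfl⟩
  rintro _ ⟨ν, hν, -, rfl⟩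
  have hint : |∫ x, φ x ∂ν| ≤ B := by
    simpa using norm_integral_le_of_norm_le_const (f := φ) (μ := ν) (ae_of_all _ hB)
  refine add_le_add (entropy_le_topEnt measure_univ) ((le_abs_self _).trans ?_)
  rw [abs_mul]
  exact mul_le_mul_of_nonneg_left hint (abs_nonneg β)

theorem cond_mem_ES (hd : 1 ≤ d) (hφ : Continuous φ) (hμ : μ ∈ ES φ β) {S : Set (Cfg d A)}
    (hS : MeasurableSet S) (hinv : ∀ n : Fin d → ℤ, shift n ⁻¹' S = S) (h₀ : μ S ≠ 0) :
    ProbabilityTheory.cond μ S ∈ ES φ β := by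
  obtain ⟨_, hμinv, hmax⟩ := hμ
  have hprob := ProbabilityTheory.cond_isProbabilityMeasure h₀
  refine ⟨hprob, hμinv.cond hS hinv, (le_pressure hφ β (hμinv.cond hS hinv)).antisymm ?_⟩
  by_cases h₁ : μ Sᶜ = 0
  · have hcond : ProbabilityTheory.cond μ S = μ := by
      simpa [h₁, (prob_compl_eq_zero_iff hS).1 h₁] using smul_cond_add_smul_cond_compl hS μ
    rw [hcond, hmax]
  · have := ProbabilityTheory.cond_isProbabilityMeasure h₁
    have hinv' (n : Fin d → ℤ) : shift n ⁻¹' Sᶜ = Sᶜ := by rw [Set.preimage_compl, hinv n]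
    have ha : 0 < μ.real S := ENNReal.toReal_pos h₀ (measure_ne_top _ _)
    have hcompl := le_pressure hφ β (hμinv.cond hS.compl hinv')
    have hent := entropy_le_cond_add_cond_compl hd hμinv hS hinv h₀ h₁
    have hint := integral_eq_integral_cond_add_integral_cond_compl hS
      (integrable_of_continuous hφ μ)
    rw [probReal_compl_eq_one_sub hS] at hent hint
    have hb : 0 ≤ 1 - μ.real S := sub_nonneg.2 measureReal_le_one
    rw [hint] at hmax
    refine le_of_mul_le_mul_left ?_ ha
    linarith [mul_le_mul_of_nonneg_left hcompl hb]

theorem IsMME.of_tendsto (hsub : IsSubshift X₀) [IsProbabilityMeasure μ] (hμ : Invariant μ)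
    {ι : Type*} {L : Filter ι} [L.NeBot] {μs : ι → Measure (Cfg d A)}
    (hμs : ∀ k, IsMME X₀ (μs k))
    (hlim : ∀ f : Cfg d A → ℝ, Continuous f →
      Tendsto (fun k => ∫ x, f x ∂(μs k)) L (𝓝 (∫ x, f x ∂μ))) : IsMME X₀ μ := by
  have hprob (k : ι) : IsProbabilityMeasure (μs k) := (hμs k).1
  have hone : μ X₀ = 1 :=
    measure_eq_one_of_tendsto_integral hprob hlim hsub.2.1 fun k => (hμs k).2.2.1
  refine ⟨‹_›, hμ, hone, (entropy_le_topEnt hone).antisymm <|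
    le_entropy_of_tendsto hlim tendsto_const_nhds fun n hn =>
      ⟨fun _ => 0, tendsto_const_nhds, .of_forall fun k => ?_⟩⟩
  rw [add_zero, ← (hμs k).2.2.2]
  exact entropy_le (μs k) hn

theorem ZTA_eq_setOf_isMME (hsub : IsSubshift X₀) {βc : ℝ}
    (hES : ∀ β, βc < β → ES φ β = {μ | IsMME X₀ μ}) : ZTA φ = {μ | IsMME X₀ μ} := by
  ext μ
  constructor
  · rintro ⟨hprob, hinv, β, μs, hβ, hμs, hlim⟩
    obtain ⟨K, hK⟩ := eventually_atTop.1 (hβ.eventually_gt_atTop βc)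
    refine IsMME.of_tendsto hsub hinv (μs := fun k => μs (k + K)) (L := atTop) (fun k => ?_)
      fun f hf => (hlim f hf).comp (tendsto_add_atTop_nat K)
    have := hμs (k + K)
    rwa [hES _ (hK _ (Nat.le_add_left K k))] at this
  · intro hμ
    refine ⟨hμ.1, hμ.2.1, fun k => (βc + 1) + k, fun _ => μ,
      tendsto_atTop_add_const_left _ _ tendsto_natCast_atTop_atTop, fun k => ?_,
      fun _ _ => tendsto_const_nhds⟩
    rwa [hES _ (by have := k.cast_nonneg (α := ℝ); linarith)]

end Pressure

section Freezing

variable {d : ℕ} {A : Type} [Fintype A] [MeasurableSpace A]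

/-- A potential that vanishes exactly on `X₀`, is negative elsewhere, and costs every invariant
measure at least the entropy that the measure has in excess of `X₀`. -/
structure IsFreezingPotential [TopologicalSpace A] (X₀ : Set (Cfg d A)) (φ : Cfg d A → ℝ) :
    Prop where
  continuous : Continuous φ
  nonpos : ∀ x, φ x ≤ 0
  eq_zero_iff : ∀ x, φ x = 0 ↔ x ∈ X₀
  entropy_add_integral_le : ∀ μ : Measure (Cfg d A), IsProbabilityMeasure μ → Invariant μ →
    entropy μ + ∫ x, φ x ∂μ ≤ topEnt X₀

/-- The infimum of the inverse temperatures at which the pressure has fallen to the topological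
entropy of `X₀`. -/
noncomputable def freezingPoint (X₀ : Set (Cfg d A)) (φ : Cfg d A → ℝ) : ℝ :=
  sInf {β | pressure φ β ≤ topEnt X₀}

variable [TopologicalSpace A] {X₀ : Set (Cfg d A)}

namespace IsFreezingPotential

variable {φ : Cfg d A → ℝ} (hφ : IsFreezingPotential X₀ φ) {β : ℝ}

include hφ

theorem integral_nonpos (μ : Measure (Cfg d A)) : ∫ x, φ x ∂μ ≤ 0 :=
  MeasureTheory.integral_nonpos hφ.nonpos

theorem pressure_one_le : pressure φ 1 ≤ topEnt X₀ := by
  refine Real.sSup_le ?_ (topEnt_nonneg X₀)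
  rintro _ ⟨μ, hprob, hμ, rfl⟩
  rw [one_mul]
  exact hφ.entropy_add_integral_le μ hprob hμ

variable [DiscreteTopology A] [BorelSpace A]

theorem integral_eq_zero_iff (hsub : IsSubshift X₀) (μ : Measure (Cfg d A))
    [IsProbabilityMeasure μ] : ∫ x, φ x ∂μ = 0 ↔ μ X₀ = 1 := by
  have hsupp : {x | φ x ≠ 0} = X₀ᶜ := Set.ext fun x => (hφ.eq_zero_iff x).not
  rw [← prob_compl_eq_zero_iff hsub.2.1.measurableSet, ← hsupp, ← neg_eq_zero, ← integral_neg,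
    integral_eq_zero_iff_of_nonneg (fun x => neg_nonneg.2 (hφ.nonpos x))
      (integrable_of_continuous hφ.continuous.neg μ)]
  simp [EventuallyEq, ae_iff]

theorem integral_eq_zero_of_isMME (hsub : IsSubshift X₀) {μ : Measure (Cfg d A)}
    (hμ : IsMME X₀ μ) : ∫ x, φ x ∂μ = 0 :=
  have := hμ.1
  (hφ.integral_eq_zero_iff hsub μ).2 hμ.2.2.1

theorem topEnt_le_pressure (hsub : IsSubshift X₀) (β : ℝ) : topEnt X₀ ≤ pressure φ β := by
  obtain ⟨μ, hμ⟩ := exists_isMME hsub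
  have := hμ.1
  simpa [hφ.integral_eq_zero_of_isMME hsub hμ, hμ.2.2.2] using
    le_pressure hφ.continuous β hμ.2.1

theorem exists_pos_le_of_pressure_le (hsub : IsSubshift X₀) (hproper : X₀ ≠ Set.univ) :
    ∃ c > 0, ∀ β, pressure φ β ≤ topEnt X₀ → c ≤ β := by
  have : Nonempty A := ⟨hsub.1.some 0⟩
  have hsub_univ : IsSubshift (Set.univ : Set (Cfg d A)) :=
    ⟨Set.univ_nonempty, isClosed_univ, fun _ _ _ => trivial⟩
  obtain ⟨ν, hprob, hν, -, hent⟩ := exists_isMME hsub_univ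
  have excess : topEnt X₀ < entropy ν := by
    rw [hent, topEnt_univ]
    exact topEnt_lt_log_card hsub hproper
  have cost : 0 < -∫ x, φ x ∂ν := by linarith [hφ.entropy_add_integral_le ν hprob hν]
  refine ⟨(entropy ν - topEnt X₀) / -∫ x, φ x ∂ν, div_pos (by linarith) cost, fun β hβ => ?_⟩
  rw [div_le_iff₀ cost]
  linarith [(le_pressure hφ.continuous β hν).trans hβ]

theorem bddBelow_setOf_pressure_le (hsub : IsSubshift X₀) (hproper : X₀ ≠ Set.univ) :
    BddBelow {β | pressure φ β ≤ topEnt X₀} :=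
  have ⟨c, _, hc⟩ := hφ.exists_pos_le_of_pressure_le hsub hproper
  ⟨c, hc⟩

theorem freezingPoint_pos (hsub : IsSubshift X₀) (hproper : X₀ ≠ Set.univ) :
    0 < freezingPoint X₀ φ :=
  have ⟨_, hc, hle⟩ := hφ.exists_pos_le_of_pressure_le hsub hproper
  hc.trans_le (le_csInf ⟨1, hφ.pressure_one_le⟩ hle)

theorem freezingPoint_le_one (hsub : IsSubshift X₀) (hproper : X₀ ≠ Set.univ) :
    freezingPoint X₀ φ ≤ 1 :=
  csInf_le (hφ.bddBelow_setOf_pressure_le hsub hproper) hφ.pressure_one_le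

theorem ES_eq_setOf_isMME (hsub : IsSubshift X₀) (hβ : freezingPoint X₀ φ < β) :
    ES φ β = {μ | IsMME X₀ μ} := by
  obtain ⟨β', hβ', hlt⟩ := exists_lt_of_csInf_lt ⟨1, hφ.pressure_one_le⟩ hβ
  have bound {μ : Measure (Cfg d A)} (_ : IsProbabilityMeasure μ) (hμ : Invariant μ) :
      entropy μ + β' * ∫ x, φ x ∂μ ≤ topEnt X₀ := (le_pressure hφ.continuous β' hμ).trans hβ'
  have hpressure : pressure φ β = topEnt X₀ := by
    refine (Real.sSup_le ?_ (topEnt_nonneg X₀)).antisymm (hφ.topEnt_le_pressure hsub β)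
    rintro _ ⟨μ, hprob, hμ, rfl⟩
    linarith [bound hprob hμ,
      mul_le_mul_of_nonpos_right hlt.le (hφ.integral_nonpos μ)]
  ext μ
  constructor
  · rintro ⟨hprob, hμ, hmax⟩
    have hint : ∫ x, φ x ∂μ = 0 := by
      nlinarith [bound hprob hμ, hφ.integral_nonpos μ]
    exact ⟨hprob, hμ, (hφ.integral_eq_zero_iff hsub μ).1 hint, by
      rw [← hpressure, ← hmax, hint, mul_zero, add_zero]⟩
  · intro hμ
    exact ⟨hμ.1, hμ.2.1, by
      rw [hφ.integral_eq_zero_of_isMME hsub hμ, hpressure, hμ.2.2.2, mul_zero, add_zero]⟩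

theorem measure_eq_zero_of_mem_ES (hd : 1 ≤ d) (hsub : IsSubshift X₀) (hproper : X₀ ≠ Set.univ)
    (hβ : β < freezingPoint X₀ φ) {μ : Measure (Cfg d A)} (hμ : μ ∈ ES φ β) : μ X₀ = 0 := by
  by_contra h₀
  have hmeas : MeasurableSet X₀ := hsub.2.1.measurableSet
  have hfin : IsProbabilityMeasure μ := hμ.1
  obtain ⟨hprob, -, hmax⟩ :=
    cond_mem_ES hd hφ.continuous hμ hmeas hsub.preimage_shift h₀
  have hone : ProbabilityTheory.cond μ X₀ X₀ = 1 :=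
    ProbabilityTheory.cond_apply_self h₀ (measure_ne_top μ X₀)
  refine notMem_of_lt_csInf hβ (hφ.bddBelow_setOf_pressure_le hsub hproper) ?_
  rw [Set.mem_ofPred_eq, ← hmax, (hφ.integral_eq_zero_iff hsub _).2 hone, mul_zero, add_zero]
  exact entropy_le_topEnt hone

theorem freezingPT (hd : 1 ≤ d) (hsub : IsSubshift X₀) (hproper : X₀ ≠ Set.univ) :
    FreezingPT φ (freezingPoint X₀ φ) := by
  refine ⟨fun β β' hβ hβ' => ?_, fun β β' hβ hβ' heq => ?_⟩
  · rw [hφ.ES_eq_setOf_isMME hsub hβ, hφ.ES_eq_setOf_isMME hsub hβ']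
  · obtain ⟨μ, hμ⟩ := exists_isMME hsub
    have hmem : μ ∈ ES φ β := by rwa [heq, hφ.ES_eq_setOf_isMME hsub hβ']
    exact one_ne_zero (hμ.2.2.1.symm.trans
      (hφ.measure_eq_zero_of_mem_ES hd hsub hproper hβ hmem))

end IsFreezingPotential

variable [DiscreteTopology A] [BorelSpace A]

theorem exists_isFreezingPotential (hd : 1 ≤ d) (hsub : IsSubshift X₀) :
    ∃ φ, IsFreezingPotential X₀ φ :=
  ⟨fun x => -penalty X₀ x, (continuous_penalty hd hsub).neg,
    fun x => neg_nonpos.2 (penalty_nonneg X₀ x),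
    fun x => neg_eq_zero.trans (penalty_eq_zero_iff hd hsub x), fun μ _ hμ => by
      have := entropy_le_topEnt_add_integral_penalty hd hsub hμ
      rw [integral_neg]
      linarith⟩

end Freezing

/-- **Theorem A.** For any proper subshift `X₀` of `X = 𝒜^(ℤ^d)` there exist a
continuous potential `φ` and `β_c ∈ (0,1]` such that `φ` has a freezing phase transition at
`β_c`; for `β > β_c`, `ES(βφ)` is the set of measures of maximal entropy on `X₀` and coincides
with `ZTA(φ)`; and for `β < β_c`, `μ(X₀) = 0` for all `μ ∈ ES(βφ)`. -/
theorem statement0 (d : ℕ) (hd : 1 ≤ d) (A : Type) [Fintype A] [TopologicalSpace A]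
    [DiscreteTopology A] [MeasurableSpace A] [BorelSpace A]
    (X₀ : Set (Cfg d A)) (hsub : IsSubshift X₀) (hproper : X₀ ≠ Set.univ) :
    ∃ (φ : Cfg d A → ℝ) (βc : ℝ), Continuous φ ∧ 0 < βc ∧ βc ≤ 1 ∧
      FreezingPT φ βc ∧
      (∀ β : ℝ, βc < β → ES φ β = { μ | IsMME X₀ μ } ∧ ES φ β = ZTA φ) ∧
      (∀ β : ℝ, β < βc → ∀ μ ∈ ES φ β, μ X₀ = 0) := by
  obtain ⟨φ, hφ⟩ := exists_isFreezingPotential hd hsub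
  have hES (β : ℝ) (hβ : freezingPoint X₀ φ < β) := hφ.ES_eq_setOf_isMME hsub hβ
  exact ⟨φ, freezingPoint X₀ φ, hφ.continuous, hφ.freezingPoint_pos hsub hproper,
    hφ.freezingPoint_le_one hsub hproper, hφ.freezingPT hd hsub hproper,
    fun β hβ => ⟨hES β hβ, (hES β hβ).trans (ZTA_eq_setOf_isMME hsub hES).symm⟩,
    fun β hβ μ hμ => hφ.measure_eq_zero_of_mem_ES hd hsub hproper hβ hμ⟩

end Freezing
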